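/- arXiv:1510.06181 — 3 statements merged into one kernel-verified Lean document; each statement's English description precedes it below -/
import Mathlib

section
/- Let R be an integral domain with fraction field K and let A be a finite flat R-algebra that is finitely presented as an R-module and has split fibers, i.e., the fiber A(p) is a split k(p)-algebra for every p ∈ Spec(R). Then the map Spec(R) → ℕ, p ↦ #Bl(A(p)), is lower semicontinuous, Spec(R) = ⨿_{n∈ℕ} {p : #Bl(A(p)) = n} is a partition into locally closed subsets, and max_{p} #Bl(A(p)) = #Bl(A^K). If R is additionally universally catenary, japanese, and noetherian, then BlEx(A) := {p : #Bl(A(p)) < #Bl(A^K)} is either empty or pure of codimension one in Spec(R) with finitely many irreducible components. -/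
open TensorProduct

section BlockDefs
variable {B : Type*} [Ring B]
def IsBlockIdem (e : B) : Prop :=
  IsIdempotentElem e ∧ e ≠ 0 ∧ (∀ x : B, e * x = x * e) ∧
    ∀ f g : B, (∀ x : B, f * x = x * f) → (∀ x : B, g * x = x * g) →
      IsIdempotentElem f → IsIdempotentElem g → f * g = 0 → f + g = e → f = 0 ∨ g = 0
end BlockDefs

noncomputable def numBlocks (B : Type*) [Ring B] : ℕ := Nat.card {e : B // IsBlockIdem e}

def IsSplitAlgebra (K : Type u) (B : Type v) [Field K] [Ring B] [Algebra K B] : Prop :=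
  ∀ (S : Type v) [AddCommGroup S] [Module B S], IsSimpleModule B S →
    ∀ f : S →ₗ[B] S, ∃ k : K, ∀ s : S, f s = algebraMap K B k • s

noncomputable abbrev resFieldAt (R : Type*) [CommRing R] (p : PrimeSpectrum R) :=
  IsLocalRing.ResidueField (Localization.AtPrime p.asIdeal)

def IsIrredCompOf {X : Type*} [TopologicalSpace X] (C s : Set X) : Prop :=
  IsIrreducible C ∧ C ⊆ s ∧ ∀ C' : Set X, IsIrreducible C' → C' ⊆ s → C ⊆ C' → C' = C

def IsReducedWeilDivisor {R : Type*} [CommRing R] (s : Set (PrimeSpectrum R)) : Prop :=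
  {C | IsIrredCompOf C s}.Finite ∧
    ∀ C, IsIrredCompOf C s → ∃ q : PrimeSpectrum R, closure C = closure {q} ∧ Order.height q = 1

def IsCatenaryRing (R : Type u) [CommRing R] : Prop :=
  ∀ c d : LTSeries (PrimeSpectrum R), c.head = d.head → c.last = d.last →
    (∀ i : Fin c.length, c i.castSucc ⋖ c i.succ) →
    (∀ i : Fin d.length, d i.castSucc ⋖ d i.succ) →
    c.length = d.length

def IsUniversallyCatenary (R : Type u) [CommRing R] : Prop :=
  ∀ n : ℕ, IsCatenaryRing (MvPolynomial (Fin n) R)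

/-- A domain is japanese if its integral closure in every finite extension of its fraction
field is a finite module. -/
def IsJapaneseRing (R : Type u) [CommRing R] [IsDomain R] : Prop :=
  ∀ (L : Type u) [Field L] [Algebra (FractionRing R) L] [FiniteDimensional (FractionRing R) L]
    [Algebra R L] [IsScalarTower R (FractionRing R) L],
    Module.Finite R (integralClosure R L)

/-!
Orthogonal central idempotents of a fiber `A(p)` lift to an étale neighbourhood of `p`. Nearby
fibers of `A` thus acquire at least as many blocks after a residue field extension, and such an
extension does not change the number of blocks of an algebra whose center is split. This gives lower
semicontinuity.

For purity, let `S` be the normalization of `R` and suppose that the number of blocks does not drop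
at any prime strictly below `q`, where `q` has height at least two. The blocks of `A^K` then have
coordinates in the local ring of `S` at each of its height-one primes inside a prime `Q` over `q`,
because the dimension formula for universally catenary rings puts these primes over primes of `R`
of height at most one. As `S_Q` is the intersection of these local rings, the blocks of `A^K` are
defined over `S_Q`, so the number of blocks does not drop at `q` either.
-/

/-! ### Central idempotents and blocks -/

/-- An idempotent of the center of a ring. -/
structure IsCentralIdempotent {B : Type*} [Ring B] (e : B) : Prop where
  idem : IsIdempotentElem e
  commute : ∀ x, Commute e x

/-- A family of pairwise orthogonal nonzero central idempotents. The length of such a family bounds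
the number of blocks from below, and the blocks themselves form the longest one. -/
structure OrthogonalCentralIdempotents {B ι : Type*} [Ring B] (e : ι → B) : Prop
    extends OrthogonalIdempotents e where
  commute : ∀ i x, Commute (e i) x
  ne_zero : ∀ i, e i ≠ 0

section Blocks

variable {B B' ι : Type*} [Ring B] [Ring B'] {e f : B}

namespace IsCentralIdempotent

theorem mul (he : IsCentralIdempotent e) (hf : IsCentralIdempotent f) :
    IsCentralIdempotent (e * f) :=
  ⟨he.idem.mul_of_commute (he.commute f) hf.idem, fun x ↦ (he.commute x).mul_left (hf.commute x)⟩

theorem one_sub (he : IsCentralIdempotent e) : IsCentralIdempotent (1 - e) :=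
  ⟨he.idem.one_sub, fun x ↦ (Commute.one_left x).sub_left (he.commute x)⟩

end IsCentralIdempotent

theorem commute_map_ringEquiv (φ : B ≃+* B') {z : B} (hz : ∀ x, Commute z x) (x : B') :
    Commute (φ z) x := by
  simpa using (hz (φ.symm x)).map φ

namespace OrthogonalCentralIdempotents

variable {e : ι → B}

theorem isCentralIdempotent (he : OrthogonalCentralIdempotents e) (i : ι) :
    IsCentralIdempotent (e i) :=
  ⟨he.idem i, he.commute i⟩

theorem map (he : OrthogonalCentralIdempotents e) (φ : B →+* B') (hinj : Function.Injective φ)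
    (hφ : ∀ z, (∀ x, Commute z x) → ∀ x, Commute (φ z) x) :
    OrthogonalCentralIdempotents (φ ∘ e) where
  toOrthogonalIdempotents := he.toOrthogonalIdempotents.map φ
  commute i := hφ _ (he.commute i)
  ne_zero i := (map_ne_zero_iff φ hinj).mpr (he.ne_zero i)

theorem iSupIndep_span_singleton (he : OrthogonalCentralIdempotents e) :
    iSupIndep fun i ↦ Ideal.span {e i} := by
  refine fun i ↦ Submodule.disjoint_def.mpr fun x hx hx' ↦ ?_
  obtain ⟨b, rfl⟩ := Ideal.mem_span_singleton'.mp hx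
  have annihilated :
      ⨆ j ≠ i, Ideal.span {e j} ≤ LinearMap.ker (LinearMap.toSpanSingleton B B (e i)) :=
    iSup₂_le fun j hj ↦ (Ideal.span_singleton_le_iff_mem _).mpr (by simp [he.ortho hj])
  simpa [mul_assoc, (he.idem i).eq] using annihilated hx'

theorem finite [IsArtinianRing B] (he : OrthogonalCentralIdempotents e) : Finite ι :=
  WellFoundedLT.finite_of_iSupIndep he.iSupIndep_span_singleton fun i ↦ by simpa using he.ne_zero i

end OrthogonalCentralIdempotents

theorem IsBlockIdem.isCentralIdempotent (he : IsBlockIdem e) : IsCentralIdempotent e :=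
  ⟨he.1, he.2.2.1⟩

theorem IsBlockIdem.mul_eq_zero_or_mul_eq_self (he : IsBlockIdem e) (hf : IsCentralIdempotent f) :
    e * f = 0 ∨ e * f = e := by
  have hef := he.isCentralIdempotent.mul hf
  have hef' := he.isCentralIdempotent.mul hf.one_sub
  have ortho : e * f * (e * (1 - f)) = 0 := by
    rw [← mul_assoc, (he.isCentralIdempotent.commute f).eq, mul_assoc f, he.1.eq,
      (hf.commute e).eq, mul_assoc, hf.idem.mul_one_sub_self, mul_zero]
  have sum_eq : e * f + e * (1 - f) = e := by rw [← mul_add, add_sub_cancel, mul_one]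
  refine (he.2.2.2 _ _ hef.commute hef'.commute hef.idem hef'.idem ortho sum_eq).imp_right
    fun h ↦ ?_
  rwa [mul_sub, mul_one, sub_eq_zero, eq_comm] at h

theorem IsBlockIdem.mul_eq_zero (he : IsBlockIdem e) (hf : IsBlockIdem f) (hne : e ≠ f) :
    e * f = 0 := by
  by_contra hef
  have mul_eq_left := (he.mul_eq_zero_or_mul_eq_self hf.isCentralIdempotent).resolve_left hef
  refine hne (mul_eq_left.symm.trans ?_)
  rw [(he.isCentralIdempotent.commute f).eq] at hef ⊢
  exact (hf.mul_eq_zero_or_mul_eq_self he.isCentralIdempotent).resolve_left hef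

theorem orthogonalCentralIdempotents_blocks (B : Type*) [Ring B] :
    OrthogonalCentralIdempotents fun b : {b : B // IsBlockIdem b} ↦ b.1 where
  idem b := b.2.1
  ortho b c h := b.2.mul_eq_zero c.2 (Subtype.coe_ne_coe.mpr h)
  commute b := b.2.2.2.1
  ne_zero b := b.2.2.1

section Artinian

variable [IsArtinianRing B]

instance finite_blocks : Finite {b : B // IsBlockIdem b} :=
  (orthogonalCentralIdempotents_blocks B).finite

-- A block below `e` is a nonzero central idempotent `b = e * b` whose left ideal is minimal.
theorem IsCentralIdempotent.exists_block (he : IsCentralIdempotent e) (he0 : e ≠ 0) :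
    ∃ b, IsBlockIdem b ∧ e * b = b := by
  obtain ⟨_, ⟨b, hb, hb0, heb, rfl⟩, hmin⟩ := WellFounded.has_min
    (wellFounded_lt (α := Ideal B))
    {I | ∃ b, IsCentralIdempotent b ∧ b ≠ 0 ∧ e * b = b ∧ Ideal.span {b} = I}
    ⟨_, e, he, he0, he.idem, rfl⟩
  refine ⟨b, ⟨hb.idem, hb0, hb.commute, fun f g hf hg hfi hgi hfg hsum ↦ ?_⟩, heb⟩
  by_contra! ⟨hf0, hg0⟩
  have hbf : b * f = f := by rw [← hsum, add_mul, hfi.eq, hg f, hfg, add_zero]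
  have hbg : b * g = g := by rw [← hsum, add_mul, hgi.eq, hfg, zero_add]
  refine hmin _ ⟨f, ⟨hfi, hf⟩, hf0, by rw [← hbf, ← mul_assoc, heb], rfl⟩ ?_
  refine lt_of_le_not_ge ?_ fun hle ↦ hg0 ?_
  · rw [Ideal.span_singleton_le_iff_mem, ← hbf, (hb.commute f).eq]
    exact Ideal.mul_mem_left _ _ (Ideal.mem_span_singleton_self b)
  · obtain ⟨x, hx⟩ := Ideal.mem_span_singleton'.mp (hle (Ideal.mem_span_singleton_self b))
    rw [← hbg, ← hx, mul_assoc, hfg, mul_zero]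

theorem OrthogonalCentralIdempotents.exists_injective_blocks {e : ι → B}
    (he : OrthogonalCentralIdempotents e) :
    ∃ b : ι → {b : B // IsBlockIdem b}, Function.Injective b ∧ ∀ i, e i * b i = b i := by
  choose b hb heb using fun i ↦ (he.isCentralIdempotent i).exists_block (he.ne_zero i)
  refine ⟨fun i ↦ ⟨b i, hb i⟩, fun i j hij ↦ ?_, heb⟩
  by_contra hne
  have hij : b i = b j := congrArg Subtype.val hij
  exact (hb i).2.1 (by rw [← heb i, hij, ← heb j, ← mul_assoc, he.ortho hne, zero_mul])

theorem OrthogonalCentralIdempotents.card_le {e : ι → B} (he : OrthogonalCentralIdempotents e) :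
    Nat.card ι ≤ numBlocks B := by
  obtain ⟨b, hb, -⟩ := he.exists_injective_blocks
  exact Nat.card_le_card_of_injective b hb

theorem exists_orthogonalCentralIdempotents_fin (B : Type*) [Ring B] [IsArtinianRing B] :
    ∃ e : Fin (numBlocks B) → B, OrthogonalCentralIdempotents e :=
  ⟨_, (orthogonalCentralIdempotents_blocks B).toOrthogonalIdempotents.embedding
      (Finite.equivFin _).symm.toEmbedding,
    fun _ ↦ (orthogonalCentralIdempotents_blocks B).commute _,
    fun _ ↦ (orthogonalCentralIdempotents_blocks B).ne_zero _⟩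

theorem IsCentralIdempotent.mem_of_forall_block_mem (he : IsCentralIdempotent e)
    (S : AddSubmonoid B) (hS : ∀ b, IsBlockIdem b → b ∈ S) : e ∈ S := by
  classical
  have := Fintype.ofFinite {b : B // IsBlockIdem b}
  have blocks := orthogonalCentralIdempotents_blocks B
  let below : Finset {b : B // IsBlockIdem b} := {b | e * b = b}
  let s : B := ∑ b ∈ below, b.1
  have hs : IsCentralIdempotent s :=
    ⟨blocks.isIdempotentElem_sum, fun x ↦ Commute.sum_left _ _ _ fun b _ ↦ blocks.commute b x⟩
  suffices hes : e * (1 - s) = 0 by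
    have hes' : e * s = s := by
      rw [Finset.mul_sum]
      exact Finset.sum_congr rfl fun b hb ↦ (Finset.mem_filter.mp hb).2
    rw [mul_sub, mul_one, hes', sub_eq_zero] at hes
    exact hes ▸ S.sum_mem fun b _ ↦ hS b b.2
  by_contra hne
  obtain ⟨b, hb, hbelow⟩ := (he.mul hs.one_sub).exists_block hne
  have heb : e * b = b := by
    rw [← hbelow, ← mul_assoc, ← mul_assoc, he.idem.eq]
  have hbs : b * s = b :=
    blocks.mul_sum_of_mem (i := ⟨b, hb⟩) (Finset.mem_filter.mpr ⟨Finset.mem_univ _, heb⟩)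
  refine hb.2.1 ?_
  rw [← hbelow, mul_assoc, ((hs.one_sub).commute b).eq, mul_sub, mul_one, hbs, sub_self, mul_zero]

-- Each `e i` has a block below it. If `b` is the one below `e i` and `b ≠ e i`, then a block below
-- `e i - b` is chosen for no index.
theorem OrthogonalCentralIdempotents.mem_range_of_isBlockIdem {e : ι → B}
    (he : OrthogonalCentralIdempotents e) (hcard : Nat.card ι = numBlocks B) {b : B}
    (hb : IsBlockIdem b) : b ∈ Set.range e := by
  have := he.finite
  obtain ⟨c, hc, hec⟩ := he.exists_injective_blocks
  have hsurj : Function.Surjective c := (hc.bijective_of_nat_card_le hcard.ge).surjective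
  obtain ⟨i, hi⟩ := hsurj ⟨b, hb⟩
  have hib : e i * b = b := by simpa [hi] using hec i
  refine ⟨i, ?_⟩
  by_contra hne
  have hcompl : e i * (1 - b) ≠ 0 := by rwa [mul_sub, mul_one, hib, sub_ne_zero]
  obtain ⟨d, hd, hd'⟩ :=
    ((he.isCentralIdempotent i).mul hb.isCentralIdempotent.one_sub).exists_block hcompl
  obtain ⟨j, hj⟩ := hsurj ⟨d, hd⟩
  have hjd : e j * d = d := by simpa [hj] using hec j
  rcases eq_or_ne i j with rfl | hij
  · obtain rfl : b = d := congrArg Subtype.val (hi.symm.trans hj)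
    exact hb.2.1 (by rw [← hd', mul_assoc, sub_mul, one_mul, hb.1.eq, sub_self, mul_zero])
  · refine hd.2.1 ?_
    rw [← hjd, ← hd', ← mul_assoc, ← mul_assoc, (he.commute j (e i)).eq, he.ortho hij, zero_mul,
      zero_mul]

end Artinian

theorem numBlocks_le_of_injective [IsArtinianRing B] [IsArtinianRing B'] (φ : B →+* B')
    (hinj : Function.Injective φ) (hφ : ∀ z, (∀ x, Commute z x) → ∀ x, Commute (φ z) x) :
    numBlocks B ≤ numBlocks B' := by
  obtain ⟨e, he⟩ := exists_orthogonalCentralIdempotents_fin B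
  simpa using (he.map φ hinj hφ).card_le

theorem IsBlockIdem.map_ringEquiv (he : IsBlockIdem e) (φ : B ≃+* B') : IsBlockIdem (φ e) := by
  refine ⟨he.1.map φ, (map_ne_zero_iff φ φ.injective).mpr he.2.1,
    commute_map_ringEquiv φ he.2.2.1, fun f g hf hg hfi hgi hfg hsum ↦ ?_⟩
  have split := he.2.2.2 (φ.symm f) (φ.symm g) (commute_map_ringEquiv φ.symm hf)
    (commute_map_ringEquiv φ.symm hg) (hfi.map φ.symm) (hgi.map φ.symm)
    (by rw [← map_mul, hfg, map_zero]) (by rw [← map_add, hsum, φ.symm_apply_apply])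
  simpa using split

theorem numBlocks_congr (φ : B ≃+* B') : numBlocks B = numBlocks B' :=
  Nat.card_congr <| φ.toEquiv.subtypeEquiv fun _ ↦
    ⟨fun h ↦ h.map_ringEquiv φ, fun h ↦ by simpa using h.map_ringEquiv φ.symm⟩

end Blocks

/-! ### Split centers and descent of central idempotents along field extensions -/

/-- The center of the `k`-algebra `B` is split: every central element has all its eigenvalues in
`k`. This is all that is needed of a split algebra, cf. `IsSplitAlgebra.hasSplitCenter`. -/
def HasSplitCenter (k B : Type*) [Field k] [Ring B] [Algebra k B] : Prop :=
  ∀ z ∈ Subalgebra.center k B, (minpoly k z).Splits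

section SplitCenter

variable {k L : Type*} [Field k] [Field L] [Algebra k L]

theorem IsSplitAlgebra.exists_sub_algebraMap_mem {B : Type*} [Ring B] [Algebra k B]
    (hs : IsSplitAlgebra k B) (M : Ideal B) [M.IsMaximal] {z : B}
    (hz : z ∈ Subalgebra.center k B) : ∃ c : k, z - algebraMap k B c ∈ M := by
  have simple : IsSimpleModule B (B ⧸ M) := isSimpleModule_iff_isCoatom.mpr Ideal.IsMaximal.out
  let mulLeft : (B ⧸ M) →ₗ[B] (B ⧸ M) :=
    { toFun := fun s ↦ z • s
      map_add' := smul_add z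
      map_smul' := fun b s ↦ by
        rw [RingHom.id_apply, ← mul_smul, ← mul_smul, Subalgebra.mem_center_iff.mp hz b] }
  obtain ⟨c, hc⟩ := hs (B ⧸ M) simple mulLeft
  have hc1 : z • (Submodule.Quotient.mk 1 : B ⧸ M) =
    algebraMap k B c • (Submodule.Quotient.mk 1 : B ⧸ M) := hc (Submodule.Quotient.mk 1)
  rw [← sub_eq_zero, ← sub_smul, ← Submodule.Quotient.mk_smul, Submodule.Quotient.mk_eq_zero] at hc1
  exact ⟨c, by simpa using hc1⟩

open Polynomial in
theorem IsSplitAlgebra.exists_isRoot_of_dvd_minpoly {B : Type*} [Ring B] [Algebra k B]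
    [Module.Finite k B] (hs : IsSplitAlgebra k B) {z : B} (hz : z ∈ Subalgebra.center k B)
    {g : k[X]} (hg : ¬IsUnit g) (hgz : g ∣ minpoly k z) : ∃ c, g.IsRoot c := by
  obtain ⟨h, hgh⟩ := hgz
  have hh0 : h ≠ 0 :=
    right_ne_zero_of_mul (hgh ▸ minpoly.ne_zero (Algebra.IsIntegral.isIntegral z))
  have hhz : aeval z h ≠ 0 := fun h0 ↦ by
    obtain ⟨r, hr⟩ := minpoly.dvd k z h0
    refine hg (IsUnit.of_mul_eq_one r (mul_left_cancel₀ hh0 ?_))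
    rw [mul_one, ← mul_assoc, mul_comm h, ← hgh, ← hr]
  have proper : Ideal.span {aeval z g} ≠ ⊤ := fun htop ↦ by
    obtain ⟨b, hb⟩ := Ideal.mem_span_singleton'.mp (htop ▸ Submodule.mem_top (x := (1 : B)))
    exact hhz (by rw [← one_mul (aeval z h), ← hb, mul_assoc, ← map_mul, ← hgh, minpoly.aeval,
      mul_zero])
  obtain ⟨M, hM, hgM⟩ := Ideal.exists_le_maximal _ proper
  obtain ⟨c, hc⟩ := hs.exists_sub_algebraMap_mem M hz
  obtain ⟨q, hq⟩ := X_sub_C_dvd_sub_C_eval (a := c) (p := g)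
  have hgc : algebraMap k B (g.eval c) ∈ M := by
    have hqM : aeval z (g - C (g.eval c)) ∈ M := by
      rw [hq, mul_comm, map_mul]
      exact M.mul_mem_left _ (by simpa using hc)
    simpa using M.sub_mem (hgM (Ideal.mem_span_singleton_self _)) hqM
  refine ⟨c, by_contra fun hne ↦ hM.ne_top (Ideal.eq_top_of_isUnit_mem M hgc ?_)⟩
  exact (IsUnit.mk0 _ hne).map _

open Polynomial in
theorem IsSplitAlgebra.hasSplitCenter {B : Type*} [Ring B] [Algebra k B] [Module.Finite k B]
    (hs : IsSplitAlgebra k B) : HasSplitCenter k B := by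
  intro z hz
  obtain ⟨g, hprod, hdeg, hroots⟩ := exists_prod_multiset_X_sub_C_mul (minpoly k z)
  have hg0 : g ≠ 0 :=
    right_ne_zero_of_mul (hprod ▸ minpoly.ne_zero (Algebra.IsIntegral.isIntegral z))
  have hunit : IsUnit g := by
    by_contra hg
    obtain ⟨c, hc⟩ := hs.exists_isRoot_of_dvd_minpoly hz hg ⟨_, by rw [mul_comm, hprod]⟩
    exact Multiset.notMem_zero c (hroots ▸ (mem_roots hg0).mpr hc)
  rw [splits_iff_card_roots, ← hdeg, natDegree_eq_zero_of_isUnit hunit, add_zero]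

theorem HasSplitCenter.congr {B B' : Type*} [Ring B] [Ring B'] [Algebra k B] [Algebra k B']
    (hs : HasSplitCenter k B) (φ : B ≃ₐ[k] B') : HasSplitCenter k B' := by
  intro z hz
  rw [← minpoly.algEquiv_eq φ.symm]
  refine hs _ (Subalgebra.mem_center_iff.mpr fun b ↦ φ.injective ?_)
  simpa using Subalgebra.mem_center_iff.mp hz (φ b)

section Commutative

variable {Z W : Type*} [CommRing Z] [CommRing W]

theorem exists_isIdempotentElem_map_eq_of_comap_injective [IsArtinianRing Z] (f : Z →+* W)
    (hf : Function.Injective (PrimeSpectrum.comap f)) {u : W} (hu : IsIdempotentElem u) :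
    ∃ e, IsIdempotentElem e ∧ f e = u := by
  let V : TopologicalSpace.Clopens (PrimeSpectrum Z) :=
    ⟨PrimeSpectrum.comap f '' PrimeSpectrum.basicOpen u, isClopen_discrete _⟩
  let e := PrimeSpectrum.isIdempotentElemEquivClopens.symm V
  have he : (PrimeSpectrum.basicOpen e.1 : Set (PrimeSpectrum Z)) = V :=
    congrArg SetLike.coe (PrimeSpectrum.basicOpen_isIdempotentElemEquivClopens_symm V)
  refine ⟨e.1, e.2, PrimeSpectrum.basicOpen_injOn_isIdempotentElem (e.2.map f) hu ?_⟩
  rw [← PrimeSpectrum.comap_basicOpen]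
  ext Q
  change PrimeSpectrum.comap f Q ∈ (PrimeSpectrum.basicOpen e.1 : Set (PrimeSpectrum Z)) ↔ _
  rw [he]
  exact hf.mem_set_image

variable [Algebra k Z]

open Polynomial in
theorem exists_sub_algebraMap_mem_of_splits_minpoly (m : Ideal Z) [m.IsPrime] {z : Z}
    (hz : IsIntegral k z) (hs : (minpoly k z).Splits) : ∃ c, z - algebraMap k Z c ∈ m := by
  have hprod : ((minpoly k z).roots.map fun c ↦ z - algebraMap k Z c).prod ∈ m := by
    convert m.zero_mem
    rw [← minpoly.aeval k z]
    conv_rhs => rw [hs.eq_prod_roots_of_monic (minpoly.monic hz), map_multiset_prod]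
    simp
  obtain ⟨_, hx, hxm⟩ := (Ideal.IsPrime.multiset_prod_mem_iff_exists_mem ‹_› _).mp hprod
  obtain ⟨c, -, rfl⟩ := Multiset.mem_map.mp hx
  exact ⟨c, hxm⟩

theorem exists_sub_tmul_one_mem_map_includeRight (m : Ideal Z)
    (hm : ∀ z, ∃ c, z - algebraMap k Z c ∈ m) (w : L ⊗[k] Z) :
    ∃ l : L, w - l ⊗ₜ 1 ∈ m.map (Algebra.TensorProduct.includeRight : Z →ₐ[k] L ⊗[k] Z) := by
  induction w with
  | zero => exact ⟨0, by simp⟩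
  | tmul l z =>
    obtain ⟨c, hc⟩ := hm z
    have hfactor : l ⊗ₜ[k] z - (c • l) ⊗ₜ[k] (1 : Z) =
        l ⊗ₜ 1 * Algebra.TensorProduct.includeRight (z - algebraMap k Z c) := by
      simp [Algebra.algebraMap_eq_smul_one, tmul_sub, mul_sub, smul_tmul']
    exact ⟨c • l, hfactor ▸ Ideal.mul_mem_left _ _ (Ideal.mem_map_of_mem _ hc)⟩
  | add x y hx hy =>
    obtain ⟨a, ha⟩ := hx
    obtain ⟨b, hb⟩ := hy
    exact ⟨a + b, by rw [add_tmul, add_sub_add_comm]; exact Ideal.add_mem _ ha hb⟩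

theorem comap_includeRight_injective_of_splits_minpoly [Module.Finite k Z]
    (hs : ∀ z : Z, (minpoly k z).Splits) : Function.Injective (PrimeSpectrum.comap
      (Algebra.TensorProduct.includeRight : Z →ₐ[k] L ⊗[k] Z).toRingHom) := by
  set i := (Algebra.TensorProduct.includeRight : Z →ₐ[k] L ⊗[k] Z).toRingHom
  suffices hle : ∀ P Q, PrimeSpectrum.comap i P = PrimeSpectrum.comap i Q → P ≤ Q from
    fun P Q h ↦ le_antisymm (hle P Q h) (hle Q P h.symm)
  intro P Q hPQ w hw
  have hmP : (PrimeSpectrum.comap i P).asIdeal.map i ≤ P.asIdeal := Ideal.map_comap_le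
  have hmQ : (PrimeSpectrum.comap i P).asIdeal.map i ≤ Q.asIdeal := hPQ ▸ Ideal.map_comap_le
  obtain ⟨l, hl⟩ := exists_sub_tmul_one_mem_map_includeRight (L := L)
    (PrimeSpectrum.comap i P).asIdeal
    (fun z ↦ exists_sub_algebraMap_mem_of_splits_minpoly _ (Algebra.IsIntegral.isIntegral z)
      (hs z)) w
  have hlP : algebraMap L (L ⊗[k] Z) l ∈ P.asIdeal := by
    simpa using P.asIdeal.sub_mem hw (hmP hl)
  have hl0 : l = 0 := by
    by_contra hne
    exact P.isPrime.ne_top (Ideal.eq_top_of_isUnit_mem _ hlP ((IsUnit.mk0 l hne).map _))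
  rw [hl0, zero_tmul, sub_zero] at hl
  exact hmQ hl

end Commutative

variable {B : Type*} [Ring B] [Algebra k B]

theorem commute_one_tmul {S C : Type*} [CommRing S] [Algebra S B] [CommRing C] [Algebra S C]
    {z : B} (hz : ∀ x, Commute z x) (x : C ⊗[S] B) : Commute (1 ⊗ₜ z) x := by
  induction x with
  | zero => exact Commute.zero_right _
  | add x y hx hy => exact hx.add_right hy
  | tmul l b => simp [commute_iff_eq, (hz b).eq]

theorem HasSplitCenter.exists_one_tmul_eq [Module.Finite k B] (hs : HasSplitCenter k B)
    {u : L ⊗[k] B} (hu : IsCentralIdempotent u) :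
    ∃ e : B, IsCentralIdempotent e ∧ (1 : L) ⊗ₜ[k] e = u := by
  have hcentralizer : u ∈ Subalgebra.centralizer k
      ((Algebra.TensorProduct.includeRight : B →ₐ[k] L ⊗[k] B).range : Set (L ⊗[k] B)) :=
    (Subalgebra.mem_centralizer_iff k).mpr fun x _ ↦ (hu.commute x).eq.symm
  rw [Subalgebra.centralizer_range_includeRight_eq_center_tensorProduct] at hcentralizer
  obtain ⟨v, rfl⟩ := hcentralizer
  have hinj : Function.Injective
      (Algebra.TensorProduct.map (AlgHom.id k L) (Subalgebra.center k B).val) :=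
    Module.Flat.lTensor_preserves_injective_linearMap (M := L)
      (Subalgebra.center k B).val.toLinearMap Subtype.val_injective
  have hv : IsIdempotentElem v := hinj (by rw [map_mul]; exact hu.idem)
  have : IsArtinianRing (Subalgebra.center k B) := IsArtinianRing.of_finite k _
  obtain ⟨e, he, rfl⟩ := exists_isIdempotentElem_map_eq_of_comap_injective _
    (comap_includeRight_injective_of_splits_minpoly (L := L) fun z : Subalgebra.center k B ↦
      (congrArg Polynomial.Splits
        (minpoly.algHom_eq (Subalgebra.center k B).val Subtype.val_injective z)).mp (hs z z.2)) hv
  exact ⟨e, ⟨congrArg Subtype.val he, fun x ↦ (Subalgebra.mem_center_iff.mp e.2 x).symm⟩, by simp⟩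

end SplitCenter

/-! ### Base change -/

section BaseChange

/-- The canonical isomorphism `L ⊗[S] (S ⊗[R] A) ≃ L ⊗[R] A` of algebras over `L`, for a possibly
noncommutative `R`-algebra `A`. -/
noncomputable def cancelBaseChangeAlgEquiv (R S L A : Type*) [CommRing R] [CommRing S]
    [CommRing L] [Algebra R S] [Algebra S L] [Algebra R L] [IsScalarTower R S L] [Ring A]
    [Algebra R A] : L ⊗[S] (S ⊗[R] A) ≃ₐ[L] L ⊗[R] A :=
  (Algebra.TensorProduct.assoc R S L L S A).symm.trans
    (Algebra.TensorProduct.congr (Algebra.TensorProduct.rid S L L) AlgEquiv.refl)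

@[simp]
theorem cancelBaseChangeAlgEquiv_tmul {R S L A : Type*} [CommRing R] [CommRing S] [CommRing L]
    [Algebra R S] [Algebra S L] [Algebra R L] [IsScalarTower R S L] [Ring A] [Algebra R A]
    (l : L) (s : S) (a : A) :
    cancelBaseChangeAlgEquiv R S L A (l ⊗ₜ (s ⊗ₜ a)) = (s • l) ⊗ₜ a := by
  simp [cancelBaseChangeAlgEquiv]

instance isArtinianRing_tensorProduct {R k A : Type*} [CommRing R] [Field k] [Algebra R k]
    [Ring A] [Algebra R A] [Module.Finite R A] : IsArtinianRing (k ⊗[R] A) :=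
  IsArtinianRing.of_finite k _

section Field

variable {k L B : Type*} [Field k] [Field L] [Algebra k L] [Ring B] [Algebra k B]

theorem includeRight_injective_of_field :
    Function.Injective (Algebra.TensorProduct.includeRight : B →ₐ[k] L ⊗[k] B) :=
  Algebra.TensorProduct.includeRight_injective (algebraMap k L).injective

variable [Module.Finite k B]

theorem numBlocks_le_numBlocks_tensorProduct : numBlocks B ≤ numBlocks (L ⊗[k] B) :=
  have : IsArtinianRing B := IsArtinianRing.of_finite k B
  numBlocks_le_of_injective
    (Algebra.TensorProduct.includeRight : B →ₐ[k] L ⊗[k] B).toRingHom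
    includeRight_injective_of_field fun _ ↦ commute_one_tmul

theorem HasSplitCenter.exists_orthogonalCentralIdempotents (hs : HasSplitCenter k B)
    {ι : Type*} {e : ι → L ⊗[k] B} (he : OrthogonalCentralIdempotents e) :
    ∃ f : ι → B, OrthogonalCentralIdempotents f ∧ ∀ i, (1 : L) ⊗ₜ[k] f i = e i := by
  choose f hf hfe using fun i ↦ hs.exists_one_tmul_eq (he.isCentralIdempotent i)
  refine ⟨f, ⟨⟨fun i ↦ (hf i).idem, fun i j hij ↦ ?_⟩, fun i ↦ (hf i).commute, fun i h0 ↦ ?_⟩, hfe⟩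
  · apply includeRight_injective_of_field (k := k) (L := L)
    rw [map_mul, map_zero, Algebra.TensorProduct.includeRight_apply,
      Algebra.TensorProduct.includeRight_apply, hfe, hfe, he.ortho hij]
  · exact he.ne_zero i (by rw [← hfe, h0, tmul_zero])

theorem HasSplitCenter.numBlocks_tensorProduct (hs : HasSplitCenter k B) :
    numBlocks (L ⊗[k] B) = numBlocks B := by
  have : IsArtinianRing B := IsArtinianRing.of_finite k B
  obtain ⟨e, he⟩ := exists_orthogonalCentralIdempotents_fin (L ⊗[k] B)
  obtain ⟨f, hf, -⟩ := hs.exists_orthogonalCentralIdempotents he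
  exact le_antisymm (by simpa using hf.card_le) numBlocks_le_numBlocks_tensorProduct

end Field

variable {R A : Type*} [CommRing R] [Ring A] [Algebra R A]

theorem numBlocks_tensorProduct_tensorProduct (S L : Type*) [CommRing S] [CommRing L]
    [Algebra R S] [Algebra S L] [Algebra R L] [IsScalarTower R S L] :
    numBlocks (L ⊗[S] (S ⊗[R] A)) = numBlocks (L ⊗[R] A) :=
  numBlocks_congr (cancelBaseChangeAlgEquiv R S L A).toRingEquiv

variable [Module.Finite R A] {k L : Type*} [Field k] [Field L] [Algebra R k] [Algebra R L]

theorem numBlocks_tensorProduct_le_of_algHom (φ : k →ₐ[R] L) :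
    numBlocks (k ⊗[R] A) ≤ numBlocks (L ⊗[R] A) := by
  algebraize [φ.toRingHom]
  have : IsScalarTower R k L := .of_algebraMap_eq fun r ↦ (φ.commutes r).symm
  exact numBlocks_le_numBlocks_tensorProduct.trans_eq (numBlocks_tensorProduct_tensorProduct k L)

theorem HasSplitCenter.numBlocks_tensorProduct_eq_of_algHom
    (hs : HasSplitCenter k (k ⊗[R] A)) (φ : k →ₐ[R] L) :
    numBlocks (L ⊗[R] A) = numBlocks (k ⊗[R] A) := by
  algebraize [φ.toRingHom]
  have : IsScalarTower R k L := .of_algebraMap_eq fun r ↦ (φ.commutes r).symm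
  rw [← hs.numBlocks_tensorProduct (L := L), numBlocks_tensorProduct_tensorProduct]

end BaseChange

/-! ### Spreading out idempotents -/

section SpreadingOut

theorem isClopen_support (R M : Type*) [CommRing R] [AddCommGroup M] [Module R M]
    [Module.Finite R M] [Module.Projective R M] : IsClopen (Module.support R M) := by
  have : Module.FinitePresentation R M := Module.finitePresentation_of_projective R M
  have hopen : Module.support R M = Module.rankAtStalk M ⁻¹' {n | 0 < n} :=
    Set.ext fun p ↦ (Module.rankAtStalk_pos_iff_mem_support p).symm
  exact ⟨Module.isClosed_support, hopen ▸ Module.isLocallyConstant_rankAtStalk _⟩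

section Module

variable {R M : Type*} [CommRing R] [AddCommGroup M] [Module R M] {φ : M →ₗ[R] M}

theorem rangeRestrict_comp_subtype_range (hφ : IsIdempotentElem φ) :
    φ.rangeRestrict ∘ₗ φ.range.subtype = LinearMap.id := by
  ext ⟨_, x, rfl⟩
  exact LinearMap.congr_fun hφ.eq x

theorem lTensor_eq_zero_iff_subsingleton_tensorProduct_range (hφ : IsIdempotentElem φ)
    (N : Type*) [AddCommGroup N] [Module R N] :
    φ.lTensor N = 0 ↔ Subsingleton (N ⊗[R] φ.range) := by
  constructor
  · intro h
    have hid : (φ.rangeRestrict ∘ₗ φ ∘ₗ φ.range.subtype).lTensor N = LinearMap.id := by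
      rw [← LinearMap.lTensor_id, ← rangeRestrict_comp_subtype_range hφ]
      congr 1
      ext ⟨_, x, rfl⟩
      simp [← Module.End.mul_apply, hφ.eq]
    rw [LinearMap.lTensor_comp, LinearMap.lTensor_comp, h, LinearMap.zero_comp,
      LinearMap.comp_zero] at hid
    exact subsingleton_of_forall_eq 0 fun w ↦ (LinearMap.congr_fun hid w).symm
  · intro h
    have hfactor : φ = φ.range.subtype ∘ₗ φ.rangeRestrict := rfl
    rw [hfactor, LinearMap.lTensor_comp]
    ext : 3
    simp [Subsingleton.elim _ (0 : N ⊗[R] φ.range)]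

theorem isClopen_setOf_lTensor_residueField_eq_zero [Module.Finite R M] [Module.Projective R M]
    (hφ : IsIdempotentElem φ) :
    IsClopen {p : PrimeSpectrum R | φ.lTensor p.asIdeal.ResidueField = 0} := by
  have : Module.Projective R φ.range :=
    .of_split φ.range.subtype φ.rangeRestrict (rangeRestrict_comp_subtype_range hφ)
  convert (isClopen_support R φ.range).compl using 1
  ext p
  rw [Set.mem_ofPred_eq, lTensor_eq_zero_iff_subsingleton_tensorProduct_range hφ, Set.mem_compl_iff,
    Module.mem_support_iff_nontrivial_residueField_tensorProduct, not_nontrivial_iff_subsingleton]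

end Module

theorem orthogonalCentralIdempotents_iff {B ι : Type*} [Ring B] {e : ι → B}
    (he : ∀ i, IsIdempotentElem (e i)) :
    OrthogonalCentralIdempotents e ↔ ∀ i,
      (∀ x, e i * x * (1 - e i) = 0) ∧ (∀ x, (1 - e i) * x * e i = 0) ∧
        (¬ ∀ x, e i * x * e i = 0) ∧ ∀ j, j ≠ i → ∀ x, e i * x * e j = 0 := by
  constructor
  · intro h i
    refine ⟨fun x ↦ ?_, fun x ↦ ?_, fun h0 ↦ ?_, fun j hj x ↦ ?_⟩
    · rw [(h.commute i x).eq, mul_assoc, mul_sub, mul_one, (he i).eq, sub_self, mul_zero]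
    · rw [mul_assoc, ← (h.commute i x).eq, ← mul_assoc, sub_mul, one_mul, (he i).eq, sub_self,
        zero_mul]
    · exact h.ne_zero i (by simpa [(he i).eq] using h0 1)
    · rw [(h.commute i x).eq, mul_assoc, h.ortho hj.symm, mul_zero]
  · refine fun h ↦ ⟨⟨he, fun i j hij ↦ ?_⟩, fun i x ↦ ?_, fun i h0 ↦ ?_⟩
    · simpa using (h i).2.2.2 j hij.symm 1
    · have hl := (h i).1 x
      have hr := (h i).2.1 x
      rw [mul_sub, mul_one, sub_eq_zero] at hl
      rw [sub_mul, one_mul, sub_mul, sub_eq_zero] at hr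
      exact hl.trans hr.symm
    · exact (h i).2.2.1 fun x ↦ by simp [h0]

variable {R A : Type*} [CommRing R] [Ring A] [Algebra R A] [Module.Finite R A]
  [Module.Projective R A]

theorem isClopen_setOf_one_tmul_mul_mul_eq_zero {e f : A} (he : IsIdempotentElem e)
    (hf : IsIdempotentElem f) :
    IsClopen {p : PrimeSpectrum R | ∀ x : p.asIdeal.ResidueField ⊗[R] A,
      (1 ⊗ₜ e) * x * (1 ⊗ₜ f) = 0} := by
  have hφ : IsIdempotentElem (LinearMap.mulLeftRight R (e, f)) := by
    ext x
    simp only [Module.End.mul_apply, LinearMap.mulLeftRight_apply]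
    rw [← mul_assoc, ← mul_assoc, he.eq, mul_assoc, hf.eq]
  have hbase (p : PrimeSpectrum R) :
      (LinearMap.mulLeftRight R (e, f)).lTensor p.asIdeal.ResidueField =
        LinearMap.mulLeftRight R (1 ⊗ₜ[R] e, 1 ⊗ₜ[R] f) := by
    ext
    simp
  simpa only [hbase, LinearMap.ext_iff, LinearMap.mulLeftRight_apply, LinearMap.zero_apply]
    using isClopen_setOf_lTensor_residueField_eq_zero hφ

theorem isClopen_setOf_orthogonalCentralIdempotents {ι : Type*} [Finite ι] {e : ι → A}
    (he : ∀ i, IsIdempotentElem (e i)) :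
    IsClopen {p : PrimeSpectrum R | OrthogonalCentralIdempotents
      fun i ↦ (1 ⊗ₜ e i : p.asIdeal.ResidueField ⊗[R] A)} := by
  have he' (p : PrimeSpectrum R) (i : ι) :
      IsIdempotentElem (1 ⊗ₜ e i : p.asIdeal.ResidueField ⊗[R] A) :=
    (he i).map (Algebra.TensorProduct.includeRight : A →ₐ[R] p.asIdeal.ResidueField ⊗[R] A)
  have h_one_sub (p : PrimeSpectrum R) (i : ι) :
      1 - (1 ⊗ₜ e i : p.asIdeal.ResidueField ⊗[R] A) = 1 ⊗ₜ (1 - e i) := by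
    rw [tmul_sub, Algebra.TensorProduct.one_def]
  simp only [orthogonalCentralIdempotents_iff (he' _), h_one_sub, Set.ofPred_forall, Set.ofPred_and]
  refine isClopen_iInter_of_finite fun i ↦ ?_
  refine .inter (isClopen_setOf_one_tmul_mul_mul_eq_zero (he i) (he i).one_sub) <|
    .inter (isClopen_setOf_one_tmul_mul_mul_eq_zero (he i).one_sub (he i)) <|
    .inter (isClopen_setOf_one_tmul_mul_mul_eq_zero (he i) (he i)).compl <|
    isClopen_iInter_of_finite fun j ↦ isClopen_iInter_of_finite fun _ ↦
      isClopen_setOf_one_tmul_mul_mul_eq_zero (he i) (he j)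

theorem orthogonalCentralIdempotents_iff_of_le {ι : Type*} [Finite ι] {e : ι → A}
    (he : ∀ i, IsIdempotentElem (e i)) {p q : Ideal R} [hp : p.IsPrime] [hq : q.IsPrime]
    (hle : p ≤ q) :
    OrthogonalCentralIdempotents (fun i ↦ (1 ⊗ₜ e i : p.ResidueField ⊗[R] A)) ↔
      OrthogonalCentralIdempotents (fun i ↦ (1 ⊗ₜ e i : q.ResidueField ⊗[R] A)) := by
  let U := {p : PrimeSpectrum R | OrthogonalCentralIdempotents
    fun i ↦ (1 ⊗ₜ e i : p.asIdeal.ResidueField ⊗[R] A)}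
  have hU : IsClopen U := isClopen_setOf_orthogonalCentralIdempotents he
  have hpq : (⟨p, hp⟩ : PrimeSpectrum R) ⤳ ⟨q, hq⟩ :=
    (PrimeSpectrum.le_iff_specializes _ _).mp hle
  exact ⟨hpq.mem_closed (s := U) hU.isClosed, hpq.mem_open (s := U) hU.isOpen⟩

end SpreadingOut

/-! ### Lifting idempotents to étale neighbourhoods -/

section EtaleLifting

open Polynomial

theorem exists_notMem_smul_eq_one_tmul {R M : Type*} [CommRing R] [AddCommGroup M] [Module R M]
    (p : Ideal R) [p.IsPrime] (w : p.ResidueField ⊗[R] M) :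
    ∃ s ∉ p, ∃ m : M, s • w = 1 ⊗ₜ m := by
  induction w with
  | zero => exact ⟨1, p.one_notMem, 0, by simp⟩
  | add x y hx hy =>
    obtain ⟨s, hs, a, ha⟩ := hx
    obtain ⟨t, ht, b, hb⟩ := hy
    refine ⟨s * t, fun h ↦ (Ideal.IsPrime.mem_or_mem ‹_› h).elim hs ht, t • a + s • b, ?_⟩
    rw [smul_add, mul_comm s t, mul_smul, ha, mul_comm t s, mul_smul, hb, tmul_add, tmul_smul,
      tmul_smul]
  | tmul c m =>
    obtain ⟨x, y, hy, rfl⟩ := IsFractionRing.div_surjective (R ⧸ p) c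
    obtain ⟨x, rfl⟩ := Ideal.Quotient.mk_surjective x
    obtain ⟨y, rfl⟩ := Ideal.Quotient.mk_surjective y
    have hyp : y ∉ p := fun h ↦ nonZeroDivisors.ne_zero hy (Ideal.Quotient.eq_zero_iff_mem.mpr h)
    refine ⟨y, hyp, x • m, ?_⟩
    rw [tmul_smul, smul_tmul', smul_tmul', Ideal.algebraMap_quotient_residueField_mk,
      Ideal.algebraMap_quotient_residueField_mk, Algebra.smul_def, Algebra.smul_def, mul_one,
      mul_div_cancel₀]
    rwa [Ne, Ideal.algebraMap_residueField_eq_zero]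

theorem exists_notMem_forall_smul_eq_one_tmul {R M ι : Type*} [CommRing R] [AddCommGroup M]
    [Module R M] [Finite ι] (p : Ideal R) [p.IsPrime] (w : ι → p.ResidueField ⊗[R] M) :
    ∃ s ∉ p, ∃ m : ι → M, ∀ i, s • w i = 1 ⊗ₜ m i := by
  classical
  have := Fintype.ofFinite ι
  choose s hs m hm using fun i ↦ exists_notMem_smul_eq_one_tmul p (w i)
  refine ⟨∏ i, s i, ?_, fun i ↦ (∏ j ∈ Finset.univ.erase i, s j) • m i, fun i ↦ ?_⟩
  · rw [Ideal.IsPrime.prod_mem_iff]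
    exact fun ⟨i, _, hi⟩ ↦ hs i hi
  · rw [tmul_smul, ← hm, smul_smul, mul_comm, Finset.mul_prod_erase _ _ (Finset.mem_univ i)]

theorem exists_monic_forall_aeval_eq_zero {R A ι : Type*} [CommRing R] [Ring A] [Algebra R A]
    [Algebra.IsIntegral R A] [Finite ι] (a : ι → A) :
    ∃ f : R[X], f.Monic ∧ ∀ i, aeval (a i) f = 0 := by
  have := Fintype.ofFinite ι
  choose f hf hfa using fun i ↦ Algebra.IsIntegral.isIntegral (R := R) (a i)
  refine ⟨∏ i, f i, monic_prod_of_monic _ _ fun i _ ↦ hf i, fun i ↦ ?_⟩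
  obtain ⟨g, hg⟩ := Finset.dvd_prod_of_mem f (Finset.mem_univ i)
  rw [hg, map_mul, aeval_def, hfa, zero_mul]

theorem exists_eq_mul_isCoprime_of_eval_eq_zero {k : Type*} [Field k] {f : k[X]} (hf : f.Monic)
    {s : k} (hs : s ≠ 0) (h0 : f.eval 0 = 0) (h1 : f.eval s = 0) :
    ∃ g h : k[X], f = g * h ∧ g.Monic ∧ h.Monic ∧ IsCoprime g h ∧ g.eval s = 0 ∧ h.eval 0 = 0 := by
  obtain ⟨h, hfh, hnd⟩ := exists_eq_pow_rootMultiplicity_mul_and_not_dvd f hf.ne_zero s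
  have hpos : 0 < f.rootMultiplicity s := (rootMultiplicity_pos hf.ne_zero).mpr h1
  have hg : ((X - C s) ^ f.rootMultiplicity s).Monic := (monic_X_sub_C s).pow _
  refine ⟨(X - C s) ^ f.rootMultiplicity s, h, hfh, hg, hg.of_mul_monic_left (hfh ▸ hf),
    IsCoprime.pow_left ((irreducible_X_sub_C s).coprime_iff_not_dvd.mpr hnd),
    by simp [hpos.ne'], ?_⟩
  rw [hfh] at h0
  simpa [hs] using h0

theorem aeval_smul_of_isIdempotentElem {k B : Type*} [CommRing k] [Ring B] [Algebra k B] {e : B}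
    (he : IsIdempotentElem e) (s : k) (G : k[X]) :
    aeval (s • e) G = G.eval 0 • (1 - e) + G.eval s • e := by
  induction G using Polynomial.induction_on' with
  | add p q hp hq => rw [map_add, hp, hq, eval_add, eval_add]; module
  | monomial n a =>
    rw [aeval_monomial, eval_monomial, eval_monomial, _root_.smul_pow]
    rcases n with _ | n
    · simp [Algebra.algebraMap_eq_smul_one, smul_sub]
    · rw [he.pow_succ_eq]
      simp [Algebra.algebraMap_eq_smul_one, smul_smul, mul_comm]

-- After separating the roots `0` and `s` of `F` modulo `q` by a factorization `F = g * h`, the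
-- polynomial `G` is the idempotent of `T[X]/(F) ≃ T[X]/(g) × T[X]/(h)` which is `1` modulo `g`.
theorem exists_etale_dvd_mul_self_sub_self {R : Type u} [CommRing R] (p : Ideal R) [p.IsPrime]
    {F : R[X]} (hF : F.Monic) {s : R} (hs : s ∉ p) (h0 : F.eval 0 = 0) (h1 : F.eval s = 0) :
    ∃ (T : Type u) (_ : CommRing T) (_ : Algebra R T) (_ : Algebra.Etale R T)
      (q : Ideal T) (_ : q.IsPrime) (_ : q.LiesOver p) (G : T[X]),
      F.map (algebraMap R T) ∣ G * G - G ∧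
        (G.map (algebraMap T q.ResidueField)).eval 0 = 0 ∧
        (G.map (algebraMap T q.ResidueField)).eval (algebraMap R q.ResidueField s) = 1 := by
  have hs0 : algebraMap R p.ResidueField s ≠ 0 := by
    rwa [Ne, Ideal.algebraMap_residueField_eq_zero]
  obtain ⟨g, h, hgh, hg, hh, hco, hgs, hh0⟩ := exists_eq_mul_isCoprime_of_eval_eq_zero
    (hF.map (algebraMap R p.ResidueField)) hs0 (by rw [eval_zero_map, h0, map_zero])
    (by rw [eval_map_apply, h1, map_zero])
  obtain ⟨T, _, _, _, q, _, _, g', h', -, -, -, hfac, ⟨u, v, huv⟩, hg', hh'⟩ :=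
    Algebra.exists_etale_bijective_residueFieldMap_and_map_eq_mul_and_isCoprime p F g h hF hg hh
      hgh hco
  set ψ := Ideal.ResidueField.mapₐ p q (Algebra.ofId R T) (Ideal.over_def q p)
  have hψs : ψ.toRingHom (algebraMap R p.ResidueField s) = algebraMap R q.ResidueField s :=
    ψ.commutes s
  have hg's : (g'.map (algebraMap T q.ResidueField)).eval (algebraMap R q.ResidueField s) = 0 := by
    rw [← hg', ← hψs, eval_map_apply, hgs, map_zero]
  have hh'0 : (h'.map (algebraMap T q.ResidueField)).eval 0 = 0 := by
    rw [← hh', ← map_zero ψ.toRingHom, eval_map_apply, hh0]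
  refine ⟨T, _, _, ‹_›, q, ‹_›, ‹_›, v * h', ?_, by simp [hh'0], ?_⟩
  · rw [hfac]
    exact ⟨-(u * v), by linear_combination (v * h') * huv⟩
  · have := congrArg (fun f ↦ (f.map (algebraMap T q.ResidueField)).eval
      (algebraMap R q.ResidueField s)) huv
    simpa [hg's] using this

theorem exists_orthogonalCentralIdempotents_tensorProduct_tensorProduct
    {R A ι T k L : Type*} [CommRing R] [Ring A] [Algebra R A] [Field k] [Field L] [Algebra R k]
    [Algebra R L] (φ : k →ₐ[R] L) [CommRing T] [Algebra R T] [Algebra T L] [IsScalarTower R T L]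
    {e : ι → k ⊗[R] A} (he : OrthogonalCentralIdempotents e)
    {s : R} {a : ι → A} (ha : ∀ i, s • e i = 1 ⊗ₜ a i) :
    ∃ f : ι → L ⊗[T] (T ⊗[R] A), OrthogonalCentralIdempotents f ∧
      ∀ i, algebraMap R L s • f i = 1 ⊗ₜ (1 ⊗ₜ a i) := by
  algebraize [φ.toRingHom]
  have : IsScalarTower R k L := .of_algebraMap_eq fun r ↦ (φ.commutes r).symm
  let ψ := (cancelBaseChangeAlgEquiv R k L A).trans (cancelBaseChangeAlgEquiv R T L A).symm
  have he' := (he.map (Algebra.TensorProduct.includeRight : _ →ₐ[k] L ⊗[k] (k ⊗[R] A)).toRingHom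
    includeRight_injective_of_field fun _ ↦ commute_one_tmul).map ψ.toRingEquiv.toRingHom
      ψ.injective fun _ ↦ commute_map_ringEquiv ψ.toRingEquiv
  refine ⟨_, he', fun i ↦ ?_⟩
  change algebraMap R L s • ψ (1 ⊗ₜ e i) = _
  rw [← map_smul, algebraMap_smul, ← tmul_smul, ha, AlgEquiv.trans_apply, AlgEquiv.symm_apply_eq]
  simp

theorem exists_etale_orthogonalCentralIdempotents {R : Type u} {A ι : Type*} [CommRing R] [Ring A]
    [Algebra R A] [Module.Finite R A] [Finite ι] (p : Ideal R) [p.IsPrime]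
    {e : ι → p.ResidueField ⊗[R] A} (he : OrthogonalCentralIdempotents e) :
    ∃ (T : Type u) (_ : CommRing T) (_ : Algebra R T) (_ : Algebra.Etale R T)
      (q : Ideal T) (_ : q.IsPrime) (_ : q.LiesOver p) (f : ι → T ⊗[R] A),
      (∀ i, IsIdempotentElem (f i)) ∧
        OrthogonalCentralIdempotents fun i ↦ (1 ⊗ₜ f i : q.ResidueField ⊗[T] (T ⊗[R] A)) := by
  obtain ⟨s, hs, a, ha⟩ := exists_notMem_forall_smul_eq_one_tmul p e
  obtain ⟨F, hF, hFa⟩ := exists_monic_forall_aeval_eq_zero (R := R) a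
  obtain ⟨T, _, _, _, q, _, _, G, hG, hG0, hGs⟩ := exists_etale_dvd_mul_self_sub_self p
    ((monic_X.mul (monic_X_sub_C s)).mul hF) hs (by simp) (by simp)
  obtain ⟨e', he', hae'⟩ := exists_orthogonalCentralIdempotents_tensorProduct_tensorProduct (T := T)
    (Ideal.ResidueField.mapₐ p q (Algebra.ofId R T) (Ideal.over_def q p)) he ha
  refine ⟨T, _, _, ‹_›, q, ‹_›, ‹_›, fun i ↦ aeval (1 ⊗ₜ a i) G, fun i ↦ ?_, ?_⟩
  · have hroot : aeval (1 ⊗ₜ[R] a i : T ⊗[R] A) (F.map (algebraMap R T)) = 0 := by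
      rw [aeval_map_algebraMap, ← Algebra.TensorProduct.includeRight_apply, aeval_algHom_apply,
        hFa, map_zero]
    obtain ⟨H, hH⟩ := (Polynomial.map_dvd (algebraMap R T) (dvd_mul_left F _)).trans hG
    rw [IsIdempotentElem, ← sub_eq_zero, ← map_mul, ← map_sub, hH, map_mul, hroot, zero_mul]
  · convert he' using 2 with i
    rw [← Algebra.TensorProduct.includeRight_apply, ← aeval_algHom_apply,
      Algebra.TensorProduct.includeRight_apply, ← aeval_map_algebraMap q.ResidueField, ← hae',
      aeval_smul_of_isIdempotentElem (he'.idem i), hG0, hGs, zero_smul, one_smul, zero_add]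

end EtaleLifting

/-! ### Lower semicontinuity of the number of blocks of the fibers -/

section Semicontinuity

open Topology

theorem isClosed_setOf_lt_of_lowerSemicontinuous {X : Type*} [TopologicalSpace X] {f : X → ℕ}
    (hf : LowerSemicontinuous f) (n : ℕ) : IsClosed {x | f x < n} := by
  rcases n with _ | n
  · simp
  · simp only [Nat.lt_succ_iff]
    exact hf.isClosed_preimage n

theorem isLocallyClosed_setOf_eq_of_lowerSemicontinuous {X : Type*} [TopologicalSpace X] {f : X → ℕ}
    (hf : LowerSemicontinuous f) (n : ℕ) : IsLocallyClosed {x | f x = n} := by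
  have closed := isClosed_setOf_lt_of_lowerSemicontinuous hf
  convert (closed (n + 1)).isLocallyClosed.inter (closed n).isOpen_compl.isLocallyClosed using 1
  ext x
  simp only [Set.mem_ofPred_eq, Set.mem_inter_iff, Set.mem_compl_iff]
  lia

variable {R : Type u} {A : Type*} [CommRing R] [Ring A] [Algebra R A] [Module.Finite R A]

theorem numBlocks_resFieldAt_bot [IsDomain R] :
    numBlocks (resFieldAt R ⊥ ⊗[R] A) = numBlocks (FractionRing R ⊗[R] A) :=
  have : IsFractionRing R (resFieldAt R ⊥) :=
    inferInstanceAs (IsFractionRing R (⊥ : Ideal R).ResidueField)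
  have φ := FractionRing.algEquiv R (resFieldAt R ⊥)
  le_antisymm (numBlocks_tensorProduct_le_of_algHom φ.symm.toAlgHom)
    (numBlocks_tensorProduct_le_of_algHom φ.toAlgHom)

variable [Module.Projective R A]

theorem eventually_numBlocks_le
    (hs : ∀ p : PrimeSpectrum R, HasSplitCenter (resFieldAt R p) (resFieldAt R p ⊗[R] A))
    (p : PrimeSpectrum R) :
    ∀ᶠ p' in 𝓝 p, numBlocks (resFieldAt R p ⊗[R] A) ≤ numBlocks (resFieldAt R p' ⊗[R] A) := by
  obtain ⟨e, he⟩ := exists_orthogonalCentralIdempotents_fin (resFieldAt R p ⊗[R] A)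
  obtain ⟨T, _, _, _, q, _, hqp, f, hf, hfq⟩ :=
    exists_etale_orthogonalCentralIdempotents p.asIdeal he
  let U := {q' : PrimeSpectrum T | OrthogonalCentralIdempotents
    fun i ↦ (1 ⊗ₜ f i : q'.asIdeal.ResidueField ⊗[T] (T ⊗[R] A))}
  have hU : IsOpen U := (isClopen_setOf_orthogonalCentralIdempotents hf).isOpen
  have hp : PrimeSpectrum.comap (algebraMap R T) ⟨q, ‹_›⟩ = p :=
    PrimeSpectrum.ext (Ideal.over_def q p.asIdeal).symm
  have hpU : PrimeSpectrum.comap (algebraMap R T) '' U ∈ 𝓝 p :=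
    (PrimeSpectrum.isOpenMap_comap_of_hasGoingDown_of_finitePresentation U hU).mem_nhds
      ⟨⟨q, ‹_›⟩, hfq, hp⟩
  filter_upwards [hpU]
  rintro _ ⟨q', hq', rfl⟩
  calc numBlocks (resFieldAt R p ⊗[R] A)
      ≤ numBlocks (q'.asIdeal.ResidueField ⊗[T] (T ⊗[R] A)) := by
        simpa using OrthogonalCentralIdempotents.card_le hq'
    _ = numBlocks (q'.asIdeal.ResidueField ⊗[R] A) := numBlocks_tensorProduct_tensorProduct T _
    _ = numBlocks (resFieldAt R (PrimeSpectrum.comap (algebraMap R T) q') ⊗[R] A) :=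
      (hs _).numBlocks_tensorProduct_eq_of_algHom
        (Ideal.ResidueField.mapₐ _ q'.asIdeal (Algebra.ofId R T) rfl)

theorem lowerSemicontinuous_numBlocks
    (hs : ∀ p : PrimeSpectrum R, HasSplitCenter (resFieldAt R p) (resFieldAt R p ⊗[R] A)) :
    LowerSemicontinuous fun p : PrimeSpectrum R ↦ numBlocks (resFieldAt R p ⊗[R] A) :=
  fun p _ hy ↦ (eventually_numBlocks_le hs p).mono fun _ ↦ hy.trans_le

theorem numBlocks_le_of_le
    (hs : ∀ p : PrimeSpectrum R, HasSplitCenter (resFieldAt R p) (resFieldAt R p ⊗[R] A))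
    {p p' : PrimeSpectrum R} (hle : p' ≤ p) :
    numBlocks (resFieldAt R p ⊗[R] A) ≤ numBlocks (resFieldAt R p' ⊗[R] A) :=
  ((eventually_numBlocks_le hs p).filter_mono
    ((PrimeSpectrum.le_iff_specializes p' p).mp hle)).self_of_nhds

theorem numBlocks_le_numBlocks_fractionRing [IsDomain R]
    (hs : ∀ p : PrimeSpectrum R, HasSplitCenter (resFieldAt R p) (resFieldAt R p ⊗[R] A))
    (p : PrimeSpectrum R) :
    numBlocks (resFieldAt R p ⊗[R] A) ≤ numBlocks (FractionRing R ⊗[R] A) :=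
  (numBlocks_le_of_le hs bot_le).trans_eq numBlocks_resFieldAt_bot

end Semicontinuity

/-! ### Integrality of block idempotents at valuation rings -/

section Coordinates

variable {R A : Type*} [CommRing R] [Ring A] [Algebra R A]

theorem dual_baseChange_map {k L : Type*} [CommRing k] [CommRing L] [Algebra R k] [Algebra R L]
    (φ : k →ₐ[R] L) (l : Module.Dual R A) (w : k ⊗[R] A) :
    l.baseChange L (Algebra.TensorProduct.map φ (AlgHom.id R A) w) = φ (l.baseChange k w) := by
  induction w with
  | zero => simp only [map_zero]
  | add x y hx hy => simp only [map_add, hx, hy]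
  | tmul c a => simp

theorem exists_one_tmul_eq_of_forall_dual_mem_range [Module.Finite R A] [Module.Projective R A]
    {K : Type*} [CommRing K] [Algebra R K] {w : K ⊗[R] A}
    (hw : ∀ l : Module.Dual R A, l.baseChange K w ∈ (algebraMap R K).range) :
    ∃ a : A, 1 ⊗ₜ a = w := by
  obtain ⟨n, f, g, -, -, hfg⟩ := Module.Finite.exists_comp_eq_id_of_projective R A
  let l (j : Fin n) : Module.Dual R A := LinearMap.proj j ∘ₗ g
  let a (j : Fin n) : A := f (Pi.single j 1)
  have dual_basis (x : A) : x = ∑ j, l j x • a j := by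
    conv_lhs => rw [← LinearMap.id_apply (R := R) x, ← hfg, LinearMap.comp_apply,
      pi_eq_sum_univ' (g x), map_sum]
    simp only [map_smul]
    rfl
  have expansion (w : K ⊗[R] A) : w = ∑ j, (l j).baseChange K w • (1 : K) ⊗ₜ[R] a j := by
    induction w with
    | zero => simp
    | add x y hx hy => simp only [map_add, add_smul, Finset.sum_add_distrib, ← hx, ← hy]
    | tmul c x =>
      conv_lhs => rw [dual_basis x]
      simp [tmul_sum, smul_tmul']
  choose d hd using fun j ↦ hw (l j)
  refine ⟨∑ j, d j • a j, ?_⟩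
  rw [expansion w, tmul_sum]
  simp only [← hd, algebraMap_smul, tmul_smul]

theorem cancelBaseChangeAlgEquiv_one_tmul {S L : Type*} [CommRing S] [CommRing L] [Algebra R S]
    [Algebra S L] [Algebra R L] [IsScalarTower R S L] (w : S ⊗[R] A) :
    cancelBaseChangeAlgEquiv R S L A (1 ⊗ₜ w) =
      Algebra.TensorProduct.map (IsScalarTower.toAlgHom R S L) (AlgHom.id R A) w := by
  induction w with
  | zero => simp
  | add x y hx hy => simp only [tmul_add, map_add, hx, hy]
  | tmul s a => simp [Algebra.algebraMap_eq_smul_one]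

end Coordinates

theorem HasSplitCenter.exists_orthogonalCentralIdempotents_of_algHom {R A k L : Type*} [CommRing R]
    [Ring A] [Algebra R A] [Module.Finite R A] [Field k] [Field L] [Algebra R k] [Algebra R L]
    (hs : HasSplitCenter k (k ⊗[R] A)) (φ : k →ₐ[R] L) {ι : Type*} {e : ι → L ⊗[R] A}
    (he : OrthogonalCentralIdempotents e) :
    ∃ f : ι → k ⊗[R] A, OrthogonalCentralIdempotents f ∧
      ∀ i, Algebra.TensorProduct.map φ (AlgHom.id R A) (f i) = e i := by
  algebraize [φ.toRingHom]
  have : IsScalarTower R k L := .of_algebraMap_eq fun r ↦ (φ.commutes r).symm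
  let ψ := cancelBaseChangeAlgEquiv R k L A
  obtain ⟨f, hf, hfe⟩ := hs.exists_orthogonalCentralIdempotents
    (he.map ψ.symm.toRingEquiv.toRingHom ψ.symm.injective
      fun _ ↦ commute_map_ringEquiv ψ.symm.toRingEquiv)
  refine ⟨f, hf, fun i ↦ ?_⟩
  calc Algebra.TensorProduct.map φ (AlgHom.id R A) (f i)
      = ψ (1 ⊗ₜ f i) := (cancelBaseChangeAlgEquiv_one_tmul (f i)).symm
    _ = e i := by rw [hfe]; exact ψ.apply_symm_apply (e i)

/-- The localization of a domain `R` at a prime ideal `P`, as a subring of its fraction field. -/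
noncomputable abbrev localRingAt {R : Type*} (K : Type*) [CommRing R] [IsDomain R] [Field K]
    [Algebra R K] [IsFractionRing R K] (P : Ideal R) [P.IsPrime] : Subalgebra R K :=
  Localization.subalgebra.ofField K P.primeCompl P.primeCompl_le_nonZeroDivisors

section ValuationRing

variable {R : Type*} [CommRing R] [IsDomain R] {K : Type*} [Field K] [Algebra R K]
  [IsFractionRing R K] {P : Ideal R} [P.IsPrime]

theorem mem_localRingAt {x : K} : x ∈ localRingAt K P ↔
    ∃ a, ∃ s ∉ P, x = algebraMap R K a / algebraMap R K s := by
  simp_rw [div_eq_mul_inv]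
  exact ⟨fun ⟨a, s, hs, h⟩ ↦ ⟨a, s, hs, h⟩, fun ⟨a, s, hs, h⟩ ↦ ⟨a, s, hs, h⟩⟩

theorem exists_algebraMap_eq_mul_of_notMem_localRingAt [ValuationRing (localRingAt K P)] {x : K}
    (hx : x ∉ localRingAt K P) :
    ∃ a ∈ P, ∃ s ∉ P, algebraMap R K s = algebraMap R K a * x := by
  obtain ⟨d, hd⟩ | ⟨d, hd⟩ := ValuationRing.isInteger_or_isInteger (localRingAt K P) x
  · exact absurd (hd ▸ d.2) hx
  obtain ⟨a, s, hs, has⟩ := mem_localRingAt.mp (show x⁻¹ ∈ localRingAt K P from hd ▸ d.2)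
  have hx' : x = algebraMap R K s / algebraMap R K a := by rw [← inv_inv x, has, inv_div]
  have ha : a ∈ P := by
    by_contra ha
    exact hx (mem_localRingAt.mpr ⟨s, a, ha, hx'⟩)
  have ha0 : algebraMap R K a ≠ 0 := by
    intro ha0
    exact hx (by rw [hx', ha0, div_zero]; exact zero_mem _)
  exact ⟨a, ha, s, hs, by rw [hx', mul_div_cancel₀ _ ha0]⟩

theorem mem_localRingAt_of_map_eq [ValuationRing (localRingAt K P)] {T : Type*}
    [CommRing T] [Algebra R T] {Q₀ Q : Ideal T} [Q₀.IsPrime] [Q.LiesOver P] (hle : Q₀ ≤ Q)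
    (φ : K →ₐ[R] Q₀.ResidueField) {x : K} {t : T} (hxt : φ x = algebraMap T Q₀.ResidueField t) :
    x ∈ localRingAt K P := by
  by_contra hx
  obtain ⟨a, ha, s, hs, h⟩ := exists_algebraMap_eq_mul_of_notMem_localRingAt hx
  have hzero : algebraMap R T s - algebraMap R T a * t ∈ Q₀ := by
    rw [← Ideal.algebraMap_residueField_eq_zero, map_sub, map_mul, ← hxt,
      ← IsScalarTower.algebraMap_apply, ← IsScalarTower.algebraMap_apply, ← φ.commutes,
      ← φ.commutes, ← map_mul, h, sub_self]
  have haQ : algebraMap R T a ∈ Q := (Q.mem_of_liesOver P a).mp ha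
  refine hs ((Q.mem_of_liesOver P s).mpr ?_)
  simpa using Q.add_mem (hle hzero) (Q.mul_mem_right t haQ)

end ValuationRing

section IntegralIdempotents

variable {R : Type u} {K A : Type*} [CommRing R] [IsDomain R] [Field K] [Algebra R K]
  [IsFractionRing R K] [Ring A] [Algebra R A] [Module.Finite R A] [Module.Projective R A]
  {P : Ideal R} [P.IsPrime] [ValuationRing (localRingAt K P)]

theorem HasSplitCenter.exists_orthogonalCentralIdempotents_dual_mem_localRingAt
    (hs : HasSplitCenter K (K ⊗[R] A)) {ι : Type*} [Finite ι] {e : ι → P.ResidueField ⊗[R] A}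
    (he : OrthogonalCentralIdempotents e) :
    ∃ g : ι → K ⊗[R] A, OrthogonalCentralIdempotents g ∧
      ∀ i (l : Module.Dual R A), l.baseChange K (g i) ∈ localRingAt K P := by
  obtain ⟨T, _, _, _, Q, _, _, f, hf, hfQ⟩ := exists_etale_orthogonalCentralIdempotents P he
  obtain ⟨Q₀, hle, _, _⟩ := Ideal.exists_ideal_le_liesOver_of_le (p := (⊥ : Ideal R)) (q := P) Q
    bot_le
  have hfQ₀ := (orthogonalCentralIdempotents_iff_of_le hf hle).mpr hfQ
  have hinj : Function.Injective (Algebra.ofId R Q₀.ResidueField) := by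
    refine (injective_iff_map_eq_zero _).mpr fun r hr ↦ ?_
    rw [Algebra.ofId_apply, IsScalarTower.algebraMap_apply R T,
      Ideal.algebraMap_residueField_eq_zero, ← Q₀.mem_of_liesOver (⊥ : Ideal R)] at hr
    exact hr
  let φ : K →ₐ[R] Q₀.ResidueField := IsFractionRing.liftAlgHom hinj
  let ψ := cancelBaseChangeAlgEquiv R T Q₀.ResidueField A
  obtain ⟨g, hg, hgf⟩ := hs.exists_orthogonalCentralIdempotents_of_algHom φ
    (hfQ₀.map ψ.toRingEquiv.toRingHom ψ.injective fun _ ↦ commute_map_ringEquiv ψ.toRingEquiv)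
  refine ⟨g, hg, fun i l ↦ mem_localRingAt_of_map_eq hle φ (t := l.baseChange T (f i)) ?_⟩
  calc φ (l.baseChange K (g i))
      = l.baseChange _ (ψ (1 ⊗ₜ f i)) := by rw [← dual_baseChange_map, hgf]; rfl
    _ = algebraMap T _ (l.baseChange T (f i)) := by
      rw [cancelBaseChangeAlgEquiv_one_tmul, dual_baseChange_map]; rfl

theorem IsCentralIdempotent.dual_baseChange_mem_localRingAt {u : K ⊗[R] A}
    (hu : IsCentralIdempotent u) (hs : HasSplitCenter K (K ⊗[R] A))
    (hP : numBlocks (K ⊗[R] A) ≤ numBlocks (P.ResidueField ⊗[R] A)) (l : Module.Dual R A) :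
    l.baseChange K u ∈ localRingAt K P := by
  obtain ⟨e, he⟩ := exists_orthogonalCentralIdempotents_fin (P.ResidueField ⊗[R] A)
  obtain ⟨g, hg, hgP⟩ := hs.exists_orthogonalCentralIdempotents_dual_mem_localRingAt he
  have hcard : Nat.card (Fin (numBlocks (P.ResidueField ⊗[R] A))) = numBlocks (K ⊗[R] A) :=
    le_antisymm hg.card_le (by simpa using hP)
  refine hu.mem_of_forall_block_mem
    ((localRingAt K P).toSubmodule.toAddSubmonoid.comap (l.baseChange K)) fun b hb ↦ ?_
  obtain ⟨i, rfl⟩ := hg.mem_range_of_isBlockIdem hcard hb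
  exact hgP i l

end IntegralIdempotents

/-! ### Normal noetherian domains are the intersection of their localizations at height one -/

section HeightOne

theorem exists_isPrime_colon_le {R K : Type*} [CommRing R] [IsNoetherianRing R] [CommRing K]
    [Algebra R K] {x : K} (hx : x ∉ (1 : Submodule R K)) :
    ∃ y : K, ((1 : Submodule R K).colon {y}).IsPrime ∧
      (1 : Submodule R K).colon {x} ≤ (1 : Submodule R K).colon {y} := by
  have colon_mk (z : K) :
      (⊥ : Submodule R (K ⧸ (1 : Submodule R K))).colon {Submodule.Quotient.mk z} =
        (1 : Submodule R K).colon {z} := by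
    ext r
    simp only [Submodule.mem_colon_singleton, Submodule.mem_bot, ← Submodule.Quotient.mk_smul,
      Submodule.Quotient.mk_eq_zero]
  obtain ⟨P, hP, hxP⟩ := exists_le_isAssociatedPrime_of_isNoetherianRing R
    (Submodule.Quotient.mk x : K ⧸ (1 : Submodule R K))
    (by rwa [Ne, Submodule.Quotient.mk_eq_zero])
  obtain ⟨hprime, z, rfl⟩ := isAssociatedPrime_iff.mp hP
  obtain ⟨y, rfl⟩ := Submodule.Quotient.mk_surjective _ z
  rw [colon_mk] at hprime
  rw [colon_mk, colon_mk] at hxP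
  exact ⟨y, hprime, hxP⟩

variable {R K : Type*} [CommRing R] [Field K] [Algebra R K] [IsFractionRing R K]

theorem maximalIdeal_isPrincipal_of_smul_mem_one [IsLocalRing R] [IsNoetherianRing R]
    [IsIntegrallyClosed R] {y : K} (hy : y ∉ (1 : Submodule R K))
    (hm : ∀ c ∈ IsLocalRing.maximalIdeal R, c • y ∈ (1 : Submodule R K)) :
    (IsLocalRing.maximalIdeal R).IsPrincipal := by
  simp only [Submodule.mem_one] at hy hm
  have hinj : Function.Injective (algebraMap R K) := IsFractionRing.injective R K
  by_cases hunit : ∃ c ∈ IsLocalRing.maximalIdeal R, ∃ v : Rˣ, algebraMap R K v = c • y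
  · obtain ⟨c, hc, v, hv⟩ := hunit
    refine ⟨c, le_antisymm (fun b hb ↦ ?_) ((Ideal.span_singleton_le_iff_mem _).mpr hc)⟩
    obtain ⟨w, hw⟩ := hm b hb
    refine Submodule.mem_span_singleton.mpr ⟨w * (v⁻¹ : Rˣ), ?_⟩
    rw [smul_eq_mul, mul_right_comm, Units.mul_inv_eq_iff_eq_mul]
    apply hinj
    rw [map_mul, map_mul, hv, hw, Algebra.smul_def, Algebra.smul_def]
    ring
  · by_cases hbot : IsLocalRing.maximalIdeal R = ⊥
    · rw [hbot]
      exact bot_isPrincipal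
    -- Multiplication by `y` maps the maximal ideal to itself, so `y` is integral.
    refine absurd (IsIntegrallyClosed.isIntegral_iff.mp ?_) hy
    refine isIntegral_of_smul_mem_submodule
      (Submodule.map (Algebra.linearMap R K) (IsLocalRing.maximalIdeal R)) ?_
      (.map _ (IsNoetherian.noetherian _)) y ?_
    · rw [← Submodule.map_bot (Algebra.linearMap R K)]
      exact (Submodule.map_injective_of_injective hinj).ne hbot
    · rintro _ ⟨c, hc, rfl⟩
      obtain ⟨d, hd⟩ := hm c hc
      refine ⟨d, fun hdu ↦ hunit ⟨c, hc, hdu.unit, hd⟩, ?_⟩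
      rw [Algebra.linearMap_apply, Algebra.linearMap_apply, hd, smul_eq_mul, mul_comm,
        Algebra.smul_def]

variable [IsDomain R]

theorem notMem_localRingAt_iff {P : Ideal R} [P.IsPrime] {x : K} :
    x ∉ localRingAt K P ↔ (1 : Submodule R K).colon {x} ≤ P := by
  rw [mem_localRingAt, not_iff_comm, SetLike.not_le_iff_exists]
  simp only [Submodule.mem_colon_singleton, Submodule.mem_one, Algebra.smul_def]
  have hne {s : R} (hs : s ∉ P) : algebraMap R K s ≠ 0 := by
    rw [Ne, IsFractionRing.to_map_eq_zero_iff]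
    rintro rfl
    exact hs P.zero_mem
  constructor
  · rintro ⟨s, ⟨a, ha⟩, hs⟩
    exact ⟨a, s, hs, by rw [ha, mul_div_cancel_left₀ _ (hne hs)]⟩
  · rintro ⟨a, s, hs, rfl⟩
    exact ⟨s, ⟨a, by rw [mul_div_cancel₀ _ (hne hs)]⟩, hs⟩

instance isNoetherianRing_localRingAt [IsNoetherianRing R] (P : Ideal R) [P.IsPrime] :
    IsNoetherianRing (localRingAt K P) :=
  IsLocalization.isNoetherianRing P.primeCompl _ ‹_›

instance isLocalRing_localRingAt (P : Ideal R) [P.IsPrime] : IsLocalRing (localRingAt K P) :=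
  IsLocalization.AtPrime.isLocalRing _ P

instance isIntegrallyClosed_localRingAt [IsIntegrallyClosed R] (P : Ideal R) [P.IsPrime] :
    IsIntegrallyClosed (localRingAt K P) :=
  isIntegrallyClosed_of_isLocalization _ P.primeCompl P.primeCompl_le_nonZeroDivisors

theorem height_maximalIdeal_localRingAt (P : Ideal R) [P.IsPrime] :
    (IsLocalRing.maximalIdeal (localRingAt K P)).height = P.height := by
  rw [← IsLocalization.height_under P.primeCompl, IsLocalization.AtPrime.under_maximalIdeal _ P]

variable [IsNoetherianRing R] [IsIntegrallyClosed R] {P : Ideal R} [P.IsPrime]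

theorem maximalIdeal_localRingAt_isPrincipal {y : K} (hy : P = (1 : Submodule R K).colon {y}) :
    (IsLocalRing.maximalIdeal (localRingAt K P)).IsPrincipal := by
  refine maximalIdeal_isPrincipal_of_smul_mem_one (K := K) (y := y) ?_ fun c hc ↦ ?_
  · rw [Submodule.mem_one]
    rintro ⟨d, rfl⟩
    exact notMem_localRingAt_iff.mpr hy.ge d.2
  · rw [← IsLocalization.AtPrime.map_eq_maximalIdeal P (localRingAt K P)] at hc
    rw [← Submodule.mem_colon_singleton]
    refine Ideal.map_le_iff_le_comap.mpr (fun r hr ↦ ?_) hc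
    rw [hy, Submodule.mem_colon_singleton, Submodule.mem_one] at hr
    obtain ⟨d, hd⟩ := hr
    rw [Ideal.mem_comap, Submodule.mem_colon_singleton, algebraMap_smul, ← hd]
    exact Submodule.mem_one.mpr ⟨algebraMap R _ d, rfl⟩

theorem exists_height_eq_one_notMem_localRingAt {x : K} (hx : x ∉ (1 : Submodule R K)) :
    ∃ (P : Ideal R) (_ : P.IsPrime), P.height = 1 ∧ x ∉ localRingAt K P := by
  obtain ⟨y, hP, hxP⟩ := exists_isPrime_colon_le hx
  set P := (1 : Submodule R K).colon {y} with hPy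
  refine ⟨P, hP, le_antisymm ?_ ?_, notMem_localRingAt_iff.mpr hxP⟩
  · have := maximalIdeal_localRingAt_isPrincipal hPy
    rw [← height_maximalIdeal_localRingAt (K := K) P]
    exact Ideal.height_le_one_of_isPrincipal_of_mem_minimalPrimes
      (IsLocalRing.maximalIdeal _) _ (by simp [Ideal.minimalPrimes_eq_subsingleton_self])
  · obtain ⟨a, s, hs, rfl⟩ := IsFractionRing.div_surjective R y
    rw [Order.one_le_iff_ne_zero, Ne, Ideal.height_eq_zero_iff_eq_bot]
    refine fun h ↦ nonZeroDivisors.ne_zero hs ((Submodule.eq_bot_iff _).mp h s ?_)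
    rw [Submodule.mem_colon_singleton, Submodule.mem_one, Algebra.smul_def]
    exact ⟨a, (mul_div_cancel₀ _ (IsFractionRing.to_map_ne_zero_of_mem_nonZeroDivisors hs)).symm⟩

theorem valuationRing_localRingAt (hP : P.height = 1) : ValuationRing (localRingAt K P) := by
  have valuationRing_iff :=
    (tfae_of_isNoetherianRing_of_isLocalRing_of_isDomain (localRingAt K P)).out 1 3
  refine valuationRing_iff.mpr ⟨inferInstance, fun Q hQ hQprime ↦ ?_⟩
  refine Ideal.eq_of_le_of_height_le Q (IsLocalRing.le_maximalIdeal hQprime.ne_top) ?_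
  rw [height_maximalIdeal_localRingAt, hP, Order.one_le_iff_ne_zero, Ne,
    Ideal.height_eq_zero_iff_eq_bot]
  exact hQ

end HeightOne

section Purity

variable {R : Type u} {K A : Type*} [CommRing R] [IsDomain R] [IsNoetherianRing R]
  [IsIntegrallyClosed R] [Field K] [Algebra R K] [IsFractionRing R K] [Ring A] [Algebra R A]
  [Module.Finite R A] [Module.Projective R A]

theorem IsCentralIdempotent.exists_one_tmul_eq {u : K ⊗[R] A} (hu : IsCentralIdempotent u)
    (hs : HasSplitCenter K (K ⊗[R] A))
    (hP : ∀ (P : Ideal R) [P.IsPrime], P.height = 1 →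
      numBlocks (K ⊗[R] A) ≤ numBlocks (P.ResidueField ⊗[R] A)) :
    ∃ a : A, (1 : K) ⊗ₜ[R] a = u := by
  refine exists_one_tmul_eq_of_forall_dual_mem_range fun l ↦ ?_
  by_contra hl
  obtain ⟨P, _, hheight, hnot⟩ := exists_height_eq_one_notMem_localRingAt
    (x := l.baseChange K u) (fun h ↦ hl (Submodule.mem_one.mp h))
  have := valuationRing_localRingAt (K := K) hheight
  exact hnot (hu.dual_baseChange_mem_localRingAt hs (hP P hheight) l)

theorem HasSplitCenter.numBlocks_le_of_forall_height_eq_one (hs : HasSplitCenter K (K ⊗[R] A))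
    (hP : ∀ (P : Ideal R) [P.IsPrime], P.height = 1 →
      numBlocks (K ⊗[R] A) ≤ numBlocks (P.ResidueField ⊗[R] A))
    (q : Ideal R) [q.IsPrime] : numBlocks (K ⊗[R] A) ≤ numBlocks (q.ResidueField ⊗[R] A) := by
  obtain ⟨e, he⟩ := exists_orthogonalCentralIdempotents_fin (K ⊗[R] A)
  choose b hb using fun i ↦ (he.isCentralIdempotent i).exists_one_tmul_eq hs hP
  have idem (i) : IsIdempotentElem (b i) := by
    refine Algebra.TensorProduct.includeRight_injective (IsFractionRing.injective R K) ?_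
    rw [map_mul, Algebra.TensorProduct.includeRight_apply, hb]
    exact he.idem i
  let φ : K ⊗[R] A ≃ₐ[R] (⊥ : Ideal R).ResidueField ⊗[R] A := Algebra.TensorProduct.congr
    (IsLocalization.algEquiv (nonZeroDivisors R) K (⊥ : Ideal R).ResidueField) AlgEquiv.refl
  have φ_apply : φ ∘ e = fun i ↦ 1 ⊗ₜ b i := funext fun i ↦ by simp [φ, ← hb]
  have hbot := φ_apply ▸ he.map φ.toRingEquiv.toRingHom φ.injective
    fun _ ↦ commute_map_ringEquiv φ.toRingEquiv
  simpa using ((orthogonalCentralIdempotents_iff_of_le idem (bot_le (a := q))).mp hbot).card_le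

end Purity

/-! ### Heights in finite extensions of universally catenary domains -/

section Catenary

theorem head_eq_bot_of_length_eq_height_last {α : Type*} [PartialOrder α] [OrderBot α]
    {c : LTSeries α} (hc : (c.length : ℕ∞) = Order.height c.last) : c.head = ⊥ := by
  have head_height := Order.height_eq_index_of_length_eq_height_last hc 0
  rw [Fin.val_zero, Nat.cast_zero, Order.height_eq_zero] at head_height
  exact head_height.eq_bot

theorem covBy_of_length_eq_height_last {α : Type*} [Preorder α] {c : LTSeries α}
    (hc : (c.length : ℕ∞) = Order.height c.last) (i : Fin c.length) :
    c i.castSucc ⋖ c i.succ := by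
  refine ⟨c.strictMono Fin.castSucc_lt_succ, fun x hlt hgt ↦ ?_⟩
  have hle : Order.height (c i.castSucc) + 1 + 1 ≤ Order.height (c i.succ) :=
    (add_le_add_left (Order.height_add_one_le hlt) 1).trans (Order.height_add_one_le hgt)
  simp only [Order.height_eq_index_of_length_eq_height_last hc, Fin.val_succ,
    Fin.val_castSucc] at hle
  norm_cast at hle
  lia

theorem IsCatenaryRing.height_eq_height_add_one {T : Type u} [CommRing T] [IsDomain T]
    [IsNoetherianRing T] (hT : IsCatenaryRing T) {Q P : PrimeSpectrum T} (h : Q ⋖ P) :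
    P.asIdeal.height = Q.asIdeal.height + 1 := by
  obtain ⟨c, hcQ : c.last = Q, hc⟩ := Ideal.exists_ltSeries_length_eq_height Q.asIdeal
  obtain ⟨d, hdP : d.last = P, hd⟩ := Ideal.exists_ltSeries_length_eq_height P.asIdeal
  subst hcQ hdP
  rw [← hc, ← hd]
  rw [PrimeSpectrum.height_eq_orderHeight] at hc hd
  let saturated : RelSeries {(a, b) : PrimeSpectrum T × PrimeSpectrum T | a ⋖ b} :=
    ⟨c.length, c, covBy_of_length_eq_height_last hc⟩
  let c' : LTSeries (PrimeSpectrum T) := (saturated.snoc d.last h).ofLE fun _ hab ↦ hab.lt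
  have hhead : c'.head = d.head := by
    rw [head_eq_bot_of_length_eq_height_last hd, ← head_eq_bot_of_length_eq_height_last hc]
    exact saturated.head_snoc d.last h
  rw [← hT c' d hhead (saturated.last_snoc d.last h) (saturated.snoc d.last h).step
    (covBy_of_length_eq_height_last hd)]
  rfl

end Catenary

section DimensionFormula

open Polynomial

theorem height_under_add_one_le_of_monic_mem {R : Type*} [CommRing R] [IsNoetherianRing R]
    (P : Ideal R[X]) [P.IsPrime] {f : R[X]} (hf : f.Monic) (hfP : f ∈ P) :
    (P.under R).height + 1 ≤ P.height := by
  set p := P.under R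
  have : (p.map C).IsPrime := (Ideal.isPrime_map_C_iff_isPrime _).mpr inferInstance
  have hlt : p.map C < P := by
    refine lt_of_le_of_ne Ideal.map_comap_le fun h ↦ ?_
    rw [← h, Ideal.mem_map_C_iff] at hfP
    have one_mem := hfP f.natDegree
    rw [coeff_natDegree, hf.leadingCoeff] at one_mem
    exact Ideal.IsPrime.one_notMem inferInstance one_mem
  have : (p.map C).LiesOver p :=
    ⟨le_antisymm Ideal.le_comap_map (Ideal.comap_mono hlt.le)⟩
  have hle : p.height ≤ (p.map C).height := by
    rw [Ideal.height_eq_height_add_of_liesOver_of_hasGoingDown p (p.map C)]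
    exact le_self_add
  exact (add_le_add_left hle 1).trans (Ideal.height_add_one_le_of_lt_of_isPrime hlt)

theorem height_under_add_le_of_monic_aeval_mem {R : Type*} [CommRing R] [IsNoetherianRing R]
    (n : ℕ) (P : Ideal (MvPolynomial (Fin n) R)) [hP : P.IsPrime]
    (h : ∀ i, ∃ f : R[X], f.Monic ∧ aeval (MvPolynomial.X i) f ∈ P) :
    (P.under R).height + n ≤ P.height := by
  induction n with
  | zero =>
    have := RingEquiv.height_comap (MvPolynomial.isEmptyRingEquiv R (Fin 0)).symm P
    rw [Nat.cast_zero, add_zero, ← this]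
    rfl
  | succ n ih =>
    let σ : MvPolynomial (Fin (n + 1)) R ≃ₐ[R] (MvPolynomial (Fin n) R)[X] :=
      MvPolynomial.finSuccEquiv R n
    let P' : Ideal (MvPolynomial (Fin n) R)[X] := P.comap σ.symm
    have mem_P' {x} (hx : x ∈ P) : σ x ∈ P' := by
      rwa [Ideal.mem_comap, σ.symm_apply_apply]
    have height_P' : P'.height = P.height := RingEquiv.height_comap σ.symm.toRingEquiv P
    have under_P' : (P'.under (MvPolynomial (Fin n) R)).under R = P.under R := by
      ext r
      simp only [Ideal.under, Ideal.mem_comap, P', ← IsScalarTower.algebraMap_apply,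
        AlgEquiv.commutes]
    have under_le := ih (P'.under (MvPolynomial (Fin n) R)) fun i ↦ by
      obtain ⟨f, hf, hfP⟩ := h i.succ
      refine ⟨f, hf, ?_⟩
      have := mem_P' hfP
      rw [← aeval_algHom_apply, MvPolynomial.finSuccEquiv_X_succ, ← algebraMap_eq,
        aeval_algebraMap_apply] at this
      exact this
    obtain ⟨f, hf, hfP⟩ := h 0
    have le_P' := height_under_add_one_le_of_monic_mem P' (hf.map MvPolynomial.C) (by
      have := mem_P' hfP
      rwa [← aeval_algHom_apply, MvPolynomial.finSuccEquiv_X_zero] at this)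
    rw [← height_P', ← under_P', Nat.cast_add, Nat.cast_one, ← add_assoc]
    exact (add_le_add_left under_le 1).trans le_P'

theorem height_le_of_under_eq_bot {R : Type*} [CommRing R] [IsDomain R] [IsNoetherianRing R]
    {n : ℕ} (Q : Ideal (MvPolynomial (Fin n) R)) [hQ : Q.IsPrime] (h : Q.under R = ⊥) :
    Q.height ≤ n := by
  let M := (nonZeroDivisors R).map (MvPolynomial.C (σ := Fin n))
  let K := FractionRing R
  have disjoint : Disjoint (M : Set (MvPolynomial (Fin n) R)) Q := by
    rw [Set.disjoint_left]
    rintro _ ⟨r, hr, rfl⟩ hrQ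
    exact nonZeroDivisors.ne_zero hr ((Submodule.eq_bot_iff _).mp h r hrQ)
  let _ : Algebra (MvPolynomial (Fin n) R) (MvPolynomial (Fin n) K) :=
    MvPolynomial.algebraMvPolynomial
  have : IsLocalization M (MvPolynomial (Fin n) K) := MvPolynomial.isLocalization _ _
  have := IsLocalization.isPrime_of_isPrime_disjoint M (MvPolynomial (Fin n) K) Q hQ disjoint
  have hle := Ideal.height_le_ringKrullDim_of_isPrime
    (I := Q.map (algebraMap _ (MvPolynomial (Fin n) K)))
  rw [MvPolynomial.ringKrullDim_of_isNoetherianRing, ringKrullDim_eq_zero_of_field, Nat.card_fin,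
    zero_add, IsLocalization.height_map_of_disjoint M Q disjoint] at hle
  exact_mod_cast hle

theorem covBy_comap_of_surjective {T S : Type*} [CommRing T] [CommRing S] {f : T →+* S}
    (hf : Function.Surjective f) {p q : PrimeSpectrum S} (h : p ⋖ q) :
    PrimeSpectrum.comap f p ⋖ PrimeSpectrum.comap f q := by
  let comapEmbedding : PrimeSpectrum S ↪o PrimeSpectrum T :=
    .ofMapLEIff (PrimeSpectrum.comap f) fun p q ↦
      Ideal.comap_le_comap_iff_of_surjective f hf p.asIdeal q.asIdeal
  have hrange : Set.range comapEmbedding = PrimeSpectrum.zeroLocus (RingHom.ker f) :=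
    range_comap_of_surjective _ _ hf
  refine h.image comapEmbedding (IsUpperSet.ordConnected fun p q hle hp ↦ ?_)
  rw [hrange] at hp ⊢
  exact Set.Subset.trans hp hle

theorem bot_covBy_of_height_eq_one {S : Type*} [CommRing S] [IsDomain S] {p : PrimeSpectrum S}
    (hp : p.asIdeal.height = 1) : ⊥ ⋖ p := by
  refine ⟨bot_lt_iff_ne_bot.mpr ?_, fun q hq hqp ↦ ?_⟩
  · rintro rfl
    exact Ideal.ne_bot_of_height_eq_one hp rfl
  · have two_le := (add_le_add_left (Order.height_add_one_le hq) 1).trans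
      (Order.height_add_one_le hqp)
    rw [← PrimeSpectrum.height_eq_orderHeight p, hp, Order.height_bot] at two_le
    exact absurd two_le (by norm_num)

theorem IsUniversallyCatenary.height_under_le_one {R S : Type*} [CommRing R] [IsDomain R]
    [IsNoetherianRing R] (hcat : IsUniversallyCatenary R) [CommRing S] [IsDomain S] [Algebra R S]
    [Module.Finite R S] [FaithfulSMul R S] {P : PrimeSpectrum S} (hP : P.asIdeal.height = 1) :
    (P.asIdeal.under R).height ≤ 1 := by
  obtain ⟨n, f, hf⟩ := Algebra.FiniteType.iff_quotient_mvPolynomial''.mp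
    (inferInstance : Algebra.FiniteType R S)
  let Q : PrimeSpectrum (MvPolynomial (Fin n) R) := PrimeSpectrum.comap f.toRingHom ⊥
  let P' : PrimeSpectrum (MvPolynomial (Fin n) R) := PrimeSpectrum.comap f.toRingHom P
  have height_P' : P'.asIdeal.height = Q.asIdeal.height + 1 :=
    (hcat n).height_eq_height_add_one (covBy_comap_of_surjective hf (bot_covBy_of_height_eq_one hP))
  have under_eq (I : Ideal S) : (I.comap f.toRingHom).under R = I.under R := by
    ext r
    exact iff_of_eq (congrArg (· ∈ I) (f.commutes r))
  have height_Q : Q.asIdeal.height ≤ n := height_le_of_under_eq_bot _ <|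
    (under_eq ⊥).trans (Ideal.comap_bot_of_injective _ (FaithfulSMul.algebraMap_injective R S))
  have hle : (P'.asIdeal.under R).height + n ≤ P'.asIdeal.height :=
    height_under_add_le_of_monic_aeval_mem n _ fun i ↦ by
      obtain ⟨g, hg, hgi⟩ := Algebra.IsIntegral.isIntegral (R := R) (f (MvPolynomial.X i))
      refine ⟨g, hg, ?_⟩
      change f (aeval (MvPolynomial.X i) g) ∈ P.asIdeal
      rw [← aeval_algHom_apply, aeval_def, hgi]
      exact P.asIdeal.zero_mem
  refine (ENat.add_le_add_iff_right (ENat.natCast_ne_top n)).mp ?_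
  calc (P.asIdeal.under R).height + n
      ≤ Q.asIdeal.height + 1 := by rwa [← under_eq, ← height_P']
    _ ≤ 1 + n := by rw [add_comm]; gcongr

end DimensionFormula

/-! ### The locus where the number of blocks drops -/

section Purity

variable {R A : Type*} [CommRing R] [Ring A] [Algebra R A] [Module.Finite R A]
  [Module.Projective R A]

theorem HasSplitCenter.numBlocks_le_of_forall_height_eq_one_under {S : Type u} {K : Type*}
    [CommRing S] [IsDomain S] [IsNoetherianRing S] [IsIntegrallyClosed S] [Algebra R S] [Field K]
    [Algebra S K] [IsFractionRing S K] [Algebra R K] [IsScalarTower R S K]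
    (hs : HasSplitCenter K (K ⊗[R] A))
    (hP : ∀ (P : Ideal S) [P.IsPrime], P.height = 1 →
      numBlocks (K ⊗[R] A) ≤ numBlocks ((P.under R).ResidueField ⊗[R] A))
    (q : Ideal S) [q.IsPrime] : numBlocks (K ⊗[R] A) ≤ numBlocks (q.ResidueField ⊗[R] A) := by
  have hsS : HasSplitCenter K (K ⊗[S] (S ⊗[R] A)) :=
    hs.congr (cancelBaseChangeAlgEquiv R S K A).symm
  rw [← numBlocks_tensorProduct_tensorProduct (R := R) S K,
    ← numBlocks_tensorProduct_tensorProduct (R := R) S q.ResidueField]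
  refine hsS.numBlocks_le_of_forall_height_eq_one (fun P _ hheight ↦ ?_) q
  calc numBlocks (K ⊗[S] (S ⊗[R] A))
      = numBlocks (K ⊗[R] A) := numBlocks_tensorProduct_tensorProduct S K
    _ ≤ numBlocks ((P.under R).ResidueField ⊗[R] A) := hP P hheight
    _ ≤ numBlocks (P.ResidueField ⊗[R] A) := numBlocks_tensorProduct_le_of_algHom
      (Ideal.ResidueField.mapₐ _ P (Algebra.ofId R S) rfl)
    _ = numBlocks (P.ResidueField ⊗[S] (S ⊗[R] A)) :=
      (numBlocks_tensorProduct_tensorProduct S _).symm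

theorem IsUniversallyCatenary.numBlocks_le_of_forall_lt [IsDomain R] [IsNoetherianRing R]
    (hcat : IsUniversallyCatenary R) {S K : Type*} [CommRing S] [IsDomain S]
    [IsIntegrallyClosed S] [Algebra R S] [Module.Finite R S] [FaithfulSMul R S] [Field K]
    [Algebra S K] [IsFractionRing S K] [Algebra R K] [IsScalarTower R S K]
    (hsK : HasSplitCenter K (K ⊗[R] A)) {q : Ideal R} [q.IsPrime]
    (hsq : HasSplitCenter q.ResidueField (q.ResidueField ⊗[R] A)) (hheight : 1 < q.height)
    (hq : ∀ (p : Ideal R) [p.IsPrime], p < q →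
      numBlocks (K ⊗[R] A) ≤ numBlocks (p.ResidueField ⊗[R] A)) :
    numBlocks (K ⊗[R] A) ≤ numBlocks (q.ResidueField ⊗[R] A) := by
  have : IsNoetherianRing S := IsNoetherianRing.of_finite R S
  obtain ⟨Q, -, _, hQ⟩ := Ideal.exists_ideal_over_prime_of_isIntegral q (⊥ : Ideal S)
    (by rw [Ideal.comap_bot_of_injective _ (FaithfulSMul.algebraMap_injective R S)]; exact bot_le)
  have under_under (P : Ideal (localRingAt K Q)) : (P.under S).under R = P.under R :=
    Ideal.under_under P
  have under_maximalIdeal : (IsLocalRing.maximalIdeal (localRingAt K Q)).under R = q := by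
    rw [← under_under, IsLocalization.AtPrime.under_maximalIdeal _ Q]
    exact hQ
  refine (hsK.numBlocks_le_of_forall_height_eq_one_under (fun P _ hP ↦ hq _ ?_)
    (IsLocalRing.maximalIdeal (localRingAt K Q))).trans_eq
    (hsq.numBlocks_tensorProduct_eq_of_algHom
      (Ideal.ResidueField.mapₐ q _ (Algebra.ofId R (localRingAt K Q)) under_maximalIdeal.symm))
  have height_under_le : (P.under R).height ≤ 1 := by
    rw [← under_under]
    refine hcat.height_under_le_one (P := ⟨P.under S, inferInstance⟩) ?_
    rw [IsLocalization.height_under Q.primeCompl, hP]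
  refine lt_of_le_of_ne ?_ fun h ↦ ?_
  · rw [← under_maximalIdeal]
    exact Ideal.comap_mono (IsLocalRing.le_maximalIdeal Ideal.IsPrime.ne_top')
  · exact (hheight.trans_le (h ▸ height_under_le)).false

end Purity

/-! ### Irreducible components of the exceptional locus -/

section IrreducibleComponents

theorem IsIrredCompOf.isClosed {X : Type*} [TopologicalSpace X] {C s : Set X}
    (hC : IsIrredCompOf C s) (hs : IsClosed s) : IsClosed C := by
  obtain ⟨irreducible, hCs, maximal⟩ := hC
  rw [← maximal (closure C) irreducible.closure (closure_minimal hCs hs) subset_closure]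
  exact isClosed_closure

theorem finite_setOf_isIrredCompOf {X : Type*} [TopologicalSpace X]
    [TopologicalSpace.NoetherianSpace X] {s : Set X} (hs : IsClosed s) :
    {C | IsIrredCompOf C s}.Finite := by
  obtain ⟨T, hfinite, hclosed, hirreducible, hT⟩ :=
    TopologicalSpace.NoetherianSpace.exists_finite_set_isClosed_irreducible hs
  refine hfinite.subset fun C hC ↦ ?_
  obtain ⟨irreducible, hCs, maximal⟩ := hC
  lift T to Finset (Set X) using hfinite
  obtain ⟨t, htT, hCt⟩ := isIrreducible_iff_sUnion_isClosed.mp irreducible T hclosed (hT ▸ hCs)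
  have hts : t ⊆ s := hT ▸ Set.subset_sUnion_of_mem htT
  exact maximal t (hirreducible t htT) hts hCt ▸ htT

variable {R : Type*} [CommRing R] {s : Set (PrimeSpectrum R)}

theorem IsIrredCompOf.exists_minimal {C : Set (PrimeSpectrum R)} (hC : IsIrredCompOf C s)
    (hs : IsClosed s) : ∃ q, closure {q} = C ∧ Minimal (· ∈ s) q := by
  obtain ⟨q, hq : closure {q} = C⟩ := QuasiSober.sober hC.1 (hC.isClosed hs)
  subst hq
  obtain ⟨-, hCs, maximal⟩ := hC
  refine ⟨q, rfl, hCs (subset_closure rfl), fun p hp hpq ↦ ?_⟩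
  have closure_eq : closure {p} = closure {q} := by
    refine maximal _ isIrreducible_singleton.closure
      (closure_minimal (Set.singleton_subset_iff.mpr hp) hs) ?_
    exact ((PrimeSpectrum.le_iff_specializes p q).mp hpq).closure_subset
  rw [PrimeSpectrum.le_iff_specializes, specializes_iff_mem_closure, ← closure_eq]
  exact subset_closure rfl

theorem isReducedWeilDivisor_of_forall_minimal [IsNoetherianRing R] (hs : IsClosed s)
    (hmin : ∀ q, Minimal (· ∈ s) q → q.asIdeal.height = 1) : IsReducedWeilDivisor s := by
  refine ⟨finite_setOf_isIrredCompOf hs, fun C hC ↦ ?_⟩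
  obtain ⟨q, rfl, hq⟩ := hC.exists_minimal hs
  exact ⟨q, closure_closure, (PrimeSpectrum.height_eq_orderHeight q).symm.trans (hmin q hq)⟩

end IrreducibleComponents

section Main

variable {R : Type u} {A : Type*} [CommRing R] [IsDomain R] [Ring A] [Algebra R A]
  [Module.Finite R A] [Module.Projective R A]

theorem IsUniversallyCatenary.numBlocks_le_of_forall_lt_of_isFractionRing [IsNoetherianRing R]
    (hcat : IsUniversallyCatenary R) [Module.Finite R (integralClosure R (FractionRing R))]
    {K : Type*} [Field K] [Algebra R K] [IsFractionRing R K]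
    (hsK : HasSplitCenter K (K ⊗[R] A)) {q : Ideal R} [q.IsPrime]
    (hsq : HasSplitCenter q.ResidueField (q.ResidueField ⊗[R] A)) (hheight : 1 < q.height)
    (hq : ∀ (p : Ideal R) [p.IsPrime], p < q →
      numBlocks (K ⊗[R] A) ≤ numBlocks (p.ResidueField ⊗[R] A)) :
    numBlocks (K ⊗[R] A) ≤ numBlocks (q.ResidueField ⊗[R] A) := by
  have : Module.Finite R (integralClosure R K) :=
    .equiv (FractionRing.algEquiv R K).mapIntegralClosure.toLinearEquiv
  have : IsFractionRing (integralClosure R K) K :=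
    integralClosure.isFractionRing_of_finite_extension K K
  have : IsIntegrallyClosed (integralClosure R K) :=
    integralClosure.isIntegrallyClosedOfFiniteExtension K
  exact hcat.numBlocks_le_of_forall_lt (S := integralClosure R K) hsK hsq hheight hq

theorem height_eq_one_of_minimal_numBlocks_lt [IsNoetherianRing R]
    (hs : ∀ p : PrimeSpectrum R, HasSplitCenter (resFieldAt R p) (resFieldAt R p ⊗[R] A))
    (hcat : IsUniversallyCatenary R) [Module.Finite R (integralClosure R (FractionRing R))]
    {q : PrimeSpectrum R} (hq : Minimal (fun p : PrimeSpectrum R ↦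
      numBlocks (resFieldAt R p ⊗[R] A) < numBlocks (FractionRing R ⊗[R] A)) q) :
    q.asIdeal.height = 1 := by
  have : IsFractionRing R (resFieldAt R ⊥) :=
    inferInstanceAs (IsFractionRing R (⊥ : Ideal R).ResidueField)
  rw [← numBlocks_resFieldAt_bot] at hq
  refine le_antisymm (not_lt.mp fun hheight ↦ hq.prop.not_ge ?_) ?_
  · refine hcat.numBlocks_le_of_forall_lt_of_isFractionRing (q := q.asIdeal) (hs ⊥) (hs q) hheight
      fun p hp hpq ↦ ?_
    have hlt : (⟨p, hp⟩ : PrimeSpectrum R) < q := hpq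
    have hge := hq.not_prop_of_lt hlt
    exact not_lt.mp hge
  · rw [Order.one_le_iff_ne_zero, Ne, Ideal.height_eq_zero_iff_eq_bot]
    intro hbot
    obtain rfl : q = ⊥ := PrimeSpectrum.ext hbot
    exact hq.prop.false

theorem stmt7_general
    (hs : ∀ p : PrimeSpectrum R, HasSplitCenter (resFieldAt R p) (resFieldAt R p ⊗[R] A)) :
    LowerSemicontinuous (fun p : PrimeSpectrum R ↦ numBlocks (resFieldAt R p ⊗[R] A)) ∧
    (∀ n : ℕ, IsLocallyClosed {p : PrimeSpectrum R | numBlocks (resFieldAt R p ⊗[R] A) = n}) ∧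
    (∀ p : PrimeSpectrum R,
      numBlocks (resFieldAt R p ⊗[R] A) ≤ numBlocks (FractionRing R ⊗[R] A)) ∧
    (∃ p : PrimeSpectrum R,
      numBlocks (resFieldAt R p ⊗[R] A) = numBlocks (FractionRing R ⊗[R] A)) ∧
    (IsUniversallyCatenary R → Module.Finite R (integralClosure R (FractionRing R)) →
      IsNoetherianRing R → IsReducedWeilDivisor {p : PrimeSpectrum R |
        numBlocks (resFieldAt R p ⊗[R] A) < numBlocks (FractionRing R ⊗[R] A)}) := by
  have lsc := lowerSemicontinuous_numBlocks hs
  refine ⟨lsc, isLocallyClosed_setOf_eq_of_lowerSemicontinuous lsc,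
    numBlocks_le_numBlocks_fractionRing hs, ⟨⊥, numBlocks_resFieldAt_bot⟩, fun hcat _ _ ↦ ?_⟩
  exact isReducedWeilDivisor_of_forall_minimal (isClosed_setOf_lt_of_lowerSemicontinuous lsc _)
    fun _ ↦ height_eq_one_of_minimal_numBlocks_lt hs hcat

end Main

/-- **Lemma `split_fibers_results`.** -/
theorem stmt7 (R : Type u) [CommRing R] [IsDomain R]
    (A : Type u) [Ring A] [Algebra R A]
    [Module.Finite R A] [Module.Flat R A] [Module.FinitePresentation R A]
    (hsplitfibers : ∀ p : PrimeSpectrum R,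
      IsSplitAlgebra (resFieldAt R p) (resFieldAt R p ⊗[R] A)) :
    LowerSemicontinuous (fun p : PrimeSpectrum R => numBlocks (resFieldAt R p ⊗[R] A)) ∧
    (∀ n : ℕ, IsLocallyClosed
      {p : PrimeSpectrum R | numBlocks (resFieldAt R p ⊗[R] A) = n}) ∧
    (∀ p : PrimeSpectrum R,
      numBlocks (resFieldAt R p ⊗[R] A) ≤ numBlocks (FractionRing R ⊗[R] A)) ∧
    (∃ p : PrimeSpectrum R,
      numBlocks (resFieldAt R p ⊗[R] A) = numBlocks (FractionRing R ⊗[R] A)) ∧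
    (IsUniversallyCatenary R → IsJapaneseRing R → IsNoetherianRing R →
      ({p : PrimeSpectrum R |
          numBlocks (resFieldAt R p ⊗[R] A) < numBlocks (FractionRing R ⊗[R] A)} = ∅ ∨
        IsReducedWeilDivisor {p : PrimeSpectrum R |
          numBlocks (resFieldAt R p ⊗[R] A) < numBlocks (FractionRing R ⊗[R] A)})) := by
  have : Module.Projective R A := Module.Flat.projective_of_finitePresentation
  obtain ⟨lsc, locallyClosed, le, eq, divisor⟩ :=
    stmt7_general fun p ↦ (hsplitfibers p).hasSplitCenter
  exact ⟨lsc, locallyClosed, le, eq,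
    fun hcat hj hR ↦ Or.inr (divisor hcat (hj (FractionRing R)) hR)⟩
end

section
/- Every non-zero algebra A over an integral domain R that is finitely generated and flat as an R-module has a block decomposition: the identity 1 of A is a sum of finitely many pairwise orthogonal centrally-primitive idempotents of A. (The ring R is not assumed noetherian.) -/
/-!
Orthogonal nonzero idempotents of a torsion-free algebra over a domain are linearly independent, so
an algebra of finite rank has no infinite orthogonal sequence of them. Central idempotents form a
Boolean algebra with `e ⊓ f = e * f` and `eᶜ = 1 - e`, whose atoms are the centrally-primitive
idempotents. The successive differences of a strictly decreasing sequence in it would be orthogonal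
and nonzero, so its order is well-founded, and then its top element `1` is a finite join of atoms;
for orthogonal idempotents, joins are sums.
-/

section BooleanAlgebra

variable {α : Type*} [GeneralizedBooleanAlgebra α]

theorem exists_finset_isAtom_sup_eq [WellFoundedLT α] (a : α) :
    ∃ s : Finset α, (∀ b ∈ s, IsAtom b) ∧ s.sup id = a := by
  classical
  induction a using WellFoundedLT.induction with
  | ind a ih =>
    obtain rfl | ⟨b, hb, hba⟩ := eq_bot_or_exists_atom_le a
    · exact ⟨∅, by simp, Finset.sup_empty⟩
    · obtain ⟨s, hs, hsup⟩ := ih (a \ b) (sdiff_lt hba hb.ne_bot)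
      refine ⟨insert b s, (Finset.forall_mem_insert _ _ _).mpr ⟨hb, hs⟩, ?_⟩
      rw [Finset.sup_insert, hsup, id, sup_sdiff_cancel_right hba]

theorem pairwise_disjoint_sdiff_succ_of_antitone {u : ℕ → α} (hu : Antitone u) :
    Pairwise (Function.onFun Disjoint fun n ↦ u n \ u (n + 1)) :=
  (pairwise_disjoint_on _).mpr fun _ _ hmn ↦
    disjoint_sdiff_self_left.mono_right (sdiff_le.trans (hu hmn))

theorem wellFoundedLT_of_pairwise_disjoint_imp_exists_eq_bot
    (h : ∀ u : ℕ → α, Pairwise (Function.onFun Disjoint u) → ∃ n, u n = ⊥) :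
    WellFoundedLT α := by
  refine ⟨RelEmbedding.wellFounded_iff_isEmpty.mpr ⟨fun u ↦ ?_⟩⟩
  have hu : StrictAnti u := fun _ _ ↦ u.map_rel_iff.mpr
  obtain ⟨n, hn⟩ := h _ (pairwise_disjoint_sdiff_succ_of_antitone hu.antitone)
  exact (hu n.lt_succ_self).not_ge (sdiff_eq_bot_iff.mp hn)

end BooleanAlgebra

section Idempotents

variable {Z : Type*} [CommRing Z]

theorem disjoint_idempotents_iff_mul_eq_zero {e f : {z : Z // IsIdempotentElem z}} :
    Disjoint e f ↔ (e * f : Z) = 0 := by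
  rw [disjoint_iff, Subtype.ext_iff]
  rfl

theorem coe_sup_idempotents_of_disjoint {e f : {z : Z // IsIdempotentElem z}}
    (h : Disjoint e f) : ((e ⊔ f : {z : Z // IsIdempotentElem z}) : Z) = e + f := by
  change (e + f - e * f : Z) = e + f
  rw [disjoint_idempotents_iff_mul_eq_zero.mp h, sub_zero]

theorem coe_finset_sup_idempotents_of_pairwiseDisjoint {s : Finset {z : Z // IsIdempotentElem z}}
    (hs : (s : Set {z : Z // IsIdempotentElem z}).PairwiseDisjoint id) :
    ((s.sup id : {z : Z // IsIdempotentElem z}) : Z) = ∑ e ∈ s, (e : Z) := by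
  classical
  induction s using Finset.induction with
  | empty => rfl
  | insert e s he ih =>
    rw [Finset.coe_insert, Set.pairwiseDisjoint_insert_of_notMem (by simpa using he)] at hs
    have disjoint_sup : Disjoint e (s.sup id) := Finset.disjoint_sup_right.mpr hs.2
    rw [Finset.sup_insert, id, coe_sup_idempotents_of_disjoint disjoint_sup, ih hs.1,
      Finset.sum_insert he]

theorem orthogonalIdempotents_of_pairwise_disjoint {ι : Type*}
    {u : ι → {z : Z // IsIdempotentElem z}} (hu : Pairwise (Function.onFun Disjoint u)) :
    OrthogonalIdempotents fun i ↦ (u i : Z) where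
  idem i := (u i).2
  ortho _ _ hij := disjoint_idempotents_iff_mul_eq_zero.mp (hu hij)

end Idempotents

section Blocks

variable (A : Type*) [Ring A]

/-- The Boolean algebra of central idempotents of `A`, encoded as the idempotents of its center. -/
abbrev CentralIdempotent : Type _ := {z : Subring.center A // IsIdempotentElem z}

/-- `1` is a finite sum of pairwise orthogonal centrally-primitive idempotents of `A`. -/
def HasBlockDecomposition : Prop :=
  ∃ s : Finset A, (∀ e ∈ s, IsBlockIdem e) ∧
    (∀ e ∈ s, ∀ f ∈ s, e ≠ f → e * f = 0) ∧ ∑ e ∈ s, e = 1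

variable {A}

theorem isBlockIdem_coe_of_isAtom {e : CentralIdempotent A} (he : IsAtom e) :
    IsBlockIdem (e : A) := by
  refine ⟨congrArg Subtype.val e.2, fun h ↦ he.ne_bot (Subtype.ext (Subtype.ext h)),
    fun x ↦ (Subring.mem_center_iff.mp e.1.2 x).symm, fun f g f_central _ f_idem _ hfg hadd ↦ ?_⟩
  let f' : CentralIdempotent A :=
    ⟨⟨f, Subring.mem_center_iff.mpr fun x ↦ (f_central x).symm⟩, Subtype.ext f_idem⟩
  have f'_le : f' ≤ e := by
    have mul_eq : f * e = f := by rw [← hadd, mul_add, f_idem.eq, hfg, add_zero]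
    exact Subtype.ext mul_eq
  rcases he.le_iff.mp f'_le with f'_eq_bot | f'_eq
  · exact .inl (congrArg (fun z : CentralIdempotent A ↦ (z : A)) f'_eq_bot)
  · have f_eq : f = e := congrArg (fun z : CentralIdempotent A ↦ (z : A)) f'_eq
    exact .inr (by simpa [f_eq] using hadd)

theorem hasBlockDecomposition_of_wellFoundedLT [WellFoundedLT (CentralIdempotent A)] :
    HasBlockDecomposition A := by
  obtain ⟨s, isAtom_of_mem, sup_eq_top⟩ := exists_finset_isAtom_sup_eq (⊤ : CentralIdempotent A)
  have disjoint_of_ne : (s : Set (CentralIdempotent A)).PairwiseDisjoint id :=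
    fun e he f hf hef ↦ (isAtom_of_mem e he).disjoint_of_ne (isAtom_of_mem f hf) hef
  let val : CentralIdempotent A ↪ A :=
    (Function.Embedding.subtype _).trans (Function.Embedding.subtype _)
  refine ⟨s.map val, ?_, ?_, ?_⟩
  · simp only [Finset.forall_mem_map]
    exact fun e he ↦ isBlockIdem_coe_of_isAtom (isAtom_of_mem e he)
  · simp only [Finset.forall_mem_map]
    intro e he f hf hef
    exact congrArg Subtype.val (disjoint_idempotents_iff_mul_eq_zero.mp
      (disjoint_of_ne he hf (ne_of_apply_ne val hef)))
  · have sum_eq_one : ∑ e ∈ s, (e : Subring.center A) = 1 := by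
      rw [← coe_finset_sup_idempotents_of_pairwiseDisjoint disjoint_of_ne, sup_eq_top]
      rfl
    simpa [val] using congrArg (Subring.center A).subtype sum_eq_one

end Blocks

section TorsionFree

variable {R A : Type*} [CommRing R] [IsDomain R] [Ring A] [Algebra R A] [Module.IsTorsionFree R A]

theorem linearIndependent_of_orthogonalIdempotents {ι : Type*} {e : ι → A}
    (he : OrthogonalIdempotents e) (ne_zero : ∀ i, e i ≠ 0) : LinearIndependent R e := by
  classical
  refine linearIndependent_iff'.mpr fun s c hc i hi ↦ ?_
  have c_smul_eq_zero : c i • e i = 0 := by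
    calc c i • e i = (∑ j ∈ s, c j • e j) * e i := by
          simp [Finset.sum_mul, he.mul_eq, hi]
      _ = 0 := by rw [hc, zero_mul]
  exact (smul_eq_zero.mp c_smul_eq_zero).resolve_right (ne_zero i)

theorem wellFoundedLT_centralIdempotent_of_rank_lt_aleph0
    (h : Module.rank R A < Cardinal.aleph0) : WellFoundedLT (CentralIdempotent A) := by
  refine wellFoundedLT_of_pairwise_disjoint_imp_exists_eq_bot fun u hu ↦ ?_
  by_contra! ne_bot
  have orthogonal : OrthogonalIdempotents fun n ↦ (u n : A) :=
    (orthogonalIdempotents_of_pairwise_disjoint hu).map (Subring.center A).subtype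
  have independent : LinearIndependent R fun n ↦ (u n : A) :=
    linearIndependent_of_orthogonalIdempotents orthogonal
      fun n hn ↦ ne_bot n (Subtype.ext (Subtype.ext hn))
  exact h.not_ge (by simpa using independent.cardinal_lift_le_rank)

theorem stmt14_general (h : Module.rank R A < Cardinal.aleph0) : HasBlockDecomposition A :=
  have := wellFoundedLT_centralIdempotent_of_rank_lt_aleph0 h
  hasBlockDecomposition_of_wellFoundedLT

end TorsionFree

/-- **Corollary `finite_flat_int_block_dec`.** A nonzero finite flat algebra over an integral
domain (not necessarily noetherian) has a block decomposition: `1` is a finite sum of pairwise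
orthogonal centrally-primitive idempotents. -/
theorem stmt14 (R : Type u) [CommRing R] [IsDomain R]
    (A : Type v) [Ring A] [Algebra R A] [Nontrivial A]
    [Module.Finite R A] [Module.Flat R A] :
    ∃ s : Finset A, (∀ e ∈ s, IsBlockIdem e) ∧
      (∀ e ∈ s, ∀ f ∈ s, e ≠ f → e * f = 0) ∧ ∑ e ∈ s, e = 1 :=
  stmt14_general (Module.rank_lt_aleph0 R A)
end

section
/- Let A be a finite-dimensional algebra over a field K. If the center Z(A) is a split K-algebra (in particular, if A itself splits), then A is block-split: the number of block idempotents of A equals the number of block idempotents of L ⊗_K A for every field extension L of K. Conversely, if K is perfect and A is block-split, then Z(A) is a split K-algebra. -/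
open TensorProduct

/-- An algebra over a field `K` is block-split if its number of blocks is unchanged under every
field extension of `K`. -/
def IsBlockSplit (K : Type u) (B : Type v) [Field K] [Ring B] [Algebra K B] : Prop :=
  ∀ (L : Type u) [Field L] [Algebra K L], numBlocks B = numBlocks (L ⊗[K] B)

/-!
The block idempotents of `A` are the atoms of the Boolean algebra of idempotents of `Z = Z(A)`,
that is, of the clopen subsets of `Spec Z`. If `Z` is finite-dimensional then `Spec Z` is discrete,
so the blocks of `A` correspond to the points of `Spec Z`. Since `Z(L ⊗ A) = L ⊗ Z`, the blocks of
`L ⊗ A` correspond to the points of `Spec (L ⊗ Z)`. The projection `Spec (L ⊗ Z) → Spec Z` is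
surjective, and hence the numbers of blocks agree iff it is injective.

The algebra `Z` is split iff all its residue fields equal `K`. In that case the fibre over `p` is
`Spec (L ⊗ Z/p) = Spec L`, a point. Conversely, the `K`-embeddings of `Z/p` into an algebraically
closed field `L` give distinct points of the fibre over `p`, so injectivity forces a unique
embedding. Then `Z/p` is purely inseparable over `K`, and equal to `K` if `K` is perfect.
-/

section CommutativeBlocks

variable {R : Type*} [CommRing R]

theorem isAtom_of_isBlockIdem {e : R} (he : IsBlockIdem e) :
    IsAtom (⟨e, he.1⟩ : {a : R // IsIdempotentElem a}) := by
  obtain ⟨idem_e, e_ne_zero, -, indecomposable⟩ := he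
  refine ⟨fun h ↦ e_ne_zero (congrArg Subtype.val h), ?_⟩
  rintro ⟨f, hf⟩ hlt
  have hfe : f * e = f := congrArg Subtype.val (inf_eq_left.2 hlt.le)
  have idem_sub : IsIdempotentElem (e - f) := by
    have hff : f * f = f := hf
    have hee : e * e = e := idem_e
    change (e - f) * (e - f) = e - f
    linear_combination hff + hee - 2 * hfe
  have orthogonal : f * (e - f) = 0 := by rw [mul_sub, hfe, hf.eq, sub_self]
  rcases indecomposable f (e - f) (mul_comm f) (mul_comm _) hf idem_sub orthogonal
    (add_sub_cancel f e) with hf0 | hsub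
  · exact Subtype.ext hf0
  · exact absurd (Subtype.ext (sub_eq_zero.1 hsub).symm) hlt.ne

theorem isBlockIdem_of_isAtom {e : {a : R // IsIdempotentElem a}} (he : IsAtom e) :
    IsBlockIdem (e : R) := by
  refine ⟨e.2, fun h ↦ he.1 (Subtype.ext h), mul_comm _, ?_⟩
  intro f g _ _ hf _ hfg hsum
  have hle : (⟨f, hf⟩ : {a : R // IsIdempotentElem a}) ≤ e := by
    refine inf_eq_left.1 (Subtype.ext ?_)
    change f * e = f
    rw [← hsum, mul_add, hf.eq, hfg, add_zero]
  rcases he.le_iff.1 hle with hbot | heq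
  · exact .inl (congrArg Subtype.val hbot)
  · have hfe : f = e := congrArg Subtype.val heq
    exact .inr (add_eq_left.1 (hsum.trans hfe.symm))

variable (R) in
theorem numBlocks_eq_natCard_isAtom :
    numBlocks R = Nat.card {e : {a : R // IsIdempotentElem a} // IsAtom e} :=
  Nat.card_congr
    { toFun e := ⟨⟨e, e.2.1⟩, isAtom_of_isBlockIdem e.2⟩
      invFun e := ⟨e.1, isBlockIdem_of_isAtom e.2⟩
      left_inv _ := rfl
      right_inv _ := rfl }

/-- In a discrete space every subset is clopen: the Boolean algebra of clopen subsets is the full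
power set. -/
def clopensOrderIsoSet (X : Type*) [TopologicalSpace X] [DiscreteTopology X] :
    TopologicalSpace.Clopens X ≃o Set X where
  toFun s := s
  invFun s := ⟨s, isClopen_discrete s⟩
  left_inv _ := rfl
  right_inv _ := rfl
  map_rel_iff' := Iff.rfl

theorem natCard_isAtom_set (X : Type*) : Nat.card {s : Set X // IsAtom s} = Nat.card X :=
  (Nat.card_congr <| Equiv.ofBijective
    (fun x ↦ (⟨{x}, Set.isAtom_singleton x⟩ : {s : Set X // IsAtom s}))
    ⟨fun _ _ h ↦ Set.singleton_injective (congrArg Subtype.val h),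
      fun ⟨_, hs⟩ ↦ (Set.isAtom_iff.1 hs).imp fun _ hx ↦ Subtype.ext hx.symm⟩).symm

variable (R) in
theorem numBlocks_eq_natCard_primeSpectrum [DiscreteTopology (PrimeSpectrum R)] :
    numBlocks R = Nat.card (PrimeSpectrum R) := by
  let idempotentsIso : {a : R // IsIdempotentElem a} ≃o Set (PrimeSpectrum R) :=
    PrimeSpectrum.isIdempotentElemEquivClopens.trans (clopensOrderIsoSet _)
  calc
    numBlocks R = Nat.card {e : {a : R // IsIdempotentElem a} // IsAtom e} :=
      numBlocks_eq_natCard_isAtom R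
    _ = Nat.card {s : Set (PrimeSpectrum R) // IsAtom s} :=
      Nat.card_congr (idempotentsIso.toEquiv.subtypeEquiv
        fun e ↦ (idempotentsIso.isAtom_iff e).symm)
    _ = Nat.card (PrimeSpectrum R) := natCard_isAtom_set _

end CommutativeBlocks

section Center

theorem isBlockIdem_map_iff {R B : Type*} [CommRing R] [Ring B] {φ : R →+* B}
    (hφ : Function.Injective φ) (hrange : φ.range = Subring.center B) (e : R) :
    IsBlockIdem (φ e) ↔ IsBlockIdem e := by
  have central_map (r : R) (x : B) : φ r * x = x * φ r :=
    (Subring.mem_center_iff.1 (hrange ▸ RingHom.mem_range_self φ r) x).symm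
  have idem_map (r : R) : IsIdempotentElem (φ r) ↔ IsIdempotentElem r :=
    ⟨fun h ↦ hφ ((map_mul φ r r).trans h), fun h ↦ h.map φ⟩
  have exists_preimage (b : B) (hb : ∀ x, b * x = x * b) : ∃ r, φ r = b :=
    RingHom.mem_range.1 (hrange ▸ Subring.mem_center_iff.2 fun x ↦ (hb x).symm)
  constructor
  · rintro ⟨idem_e, e_ne_zero, -, indecomposable⟩
    refine ⟨(idem_map e).1 idem_e, fun h ↦ e_ne_zero (by rw [h, map_zero]), mul_comm e, ?_⟩
    intro f g _ _ hf hg hfg hsum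
    refine (indecomposable (φ f) (φ g) (central_map f) (central_map g) (hf.map φ) (hg.map φ) ?_
      ?_).imp (map_eq_zero_iff φ hφ).1 (map_eq_zero_iff φ hφ).1
    · rw [← map_mul, hfg, map_zero]
    · rw [← map_add, hsum]
  · rintro ⟨idem_e, e_ne_zero, -, indecomposable⟩
    refine ⟨idem_e.map φ, (map_ne_zero_iff φ hφ).2 e_ne_zero, central_map e, ?_⟩
    intro f g hf hg idem_f idem_g hfg hsum
    obtain ⟨f, rfl⟩ := exists_preimage f hf
    obtain ⟨g, rfl⟩ := exists_preimage g hg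
    refine (indecomposable f g (mul_comm f) (mul_comm g) ((idem_map f).1 idem_f)
      ((idem_map g).1 idem_g) (hφ ?_) (hφ ?_)).imp (map_eq_zero_iff φ hφ).2
      (map_eq_zero_iff φ hφ).2
    · rw [map_mul, hfg, map_zero]
    · rw [map_add, hsum]

theorem numBlocks_eq_of_range_eq_center {R B : Type*} [CommRing R] [Ring B] {φ : R →+* B}
    (hφ : Function.Injective φ) (hrange : φ.range = Subring.center B) :
    numBlocks R = numBlocks B := by
  refine Nat.card_congr (Equiv.ofBijective
    (fun e ↦ ⟨φ e, (isBlockIdem_map_iff hφ hrange _).2 e.2⟩) ⟨?_, ?_⟩)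
  · exact fun e f h ↦ Subtype.ext (hφ (congrArg Subtype.val h))
  · rintro ⟨b, hb⟩
    have hb_center : b ∈ Subring.center B :=
      Subring.mem_center_iff.2 fun x ↦ (hb.2.2.1 x).symm
    obtain ⟨e, rfl⟩ := RingHom.mem_range.1 (hrange ▸ hb_center)
    exact ⟨⟨e, (isBlockIdem_map_iff hφ hrange e).1 hb⟩, rfl⟩

variable (R S A : Type*) [CommRing R] [CommRing S] [Algebra R S] [Ring A] [Algebra R A]

theorem numBlocks_center : numBlocks (Subalgebra.center R A) = numBlocks A := by
  refine numBlocks_eq_of_range_eq_center (φ := (Subalgebra.center R A).val.toRingHom)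
    Subtype.val_injective (SetLike.ext fun b ↦ ?_)
  exact ⟨fun ⟨z, hz⟩ ↦ hz ▸ z.2, fun hb ↦ ⟨⟨b, hb⟩, rfl⟩⟩

theorem centralizer_range_includeRight_le_center :
    Subalgebra.centralizer R (Algebra.TensorProduct.includeRight : A →ₐ[R] S ⊗[R] A).range ≤
      Subalgebra.center R (S ⊗[R] A) := by
  intro b hb
  rw [Subalgebra.mem_center_iff]
  intro x
  induction x using TensorProduct.induction_on with
  | zero => rw [zero_mul, mul_zero]
  | add x y hx hy => rw [add_mul, mul_add, hx, hy]
  | tmul s a =>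
    have commute_a : (1 ⊗ₜ a : S ⊗[R] A) * b = b * (1 ⊗ₜ a) :=
      Subalgebra.mem_centralizer_iff R |>.1 hb _ ⟨a, rfl⟩
    have tmul_eq_smul : s ⊗ₜ[R] a = s • (1 ⊗ₜ a : S ⊗[R] A) := by
      rw [TensorProduct.smul_tmul', smul_eq_mul, mul_one]
    rw [tmul_eq_smul, smul_mul_assoc, mul_smul_comm, commute_a]

theorem range_map_center_val_eq_center [Module.Free R S] :
    (Algebra.TensorProduct.map (AlgHom.id R S) (Subalgebra.center R A).val).range =
      Subalgebra.center R (S ⊗[R] A) := by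
  rw [← Subalgebra.centralizer_range_includeRight_eq_center_tensorProduct]
  exact le_antisymm (centralizer_range_includeRight_le_center R S A)
    (Subalgebra.center_le_centralizer R _)

theorem numBlocks_tensorProduct_center [Module.Free R S] :
    numBlocks (S ⊗[R] Subalgebra.center R A) = numBlocks (S ⊗[R] A) := by
  refine numBlocks_eq_of_range_eq_center
    (φ := (Algebra.TensorProduct.map (AlgHom.id R S) (Subalgebra.center R A).val).toRingHom)
    ?_ (SetLike.ext fun b ↦ ?_)
  · exact Module.Flat.lTensor_preserves_injective_linearMap (M := S)
      (Subalgebra.center R A).val.toLinearMap Subtype.val_injective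
  · exact SetLike.ext_iff.1 (range_map_center_val_eq_center R S A) b

end Center

section Split

theorem isSplitAlgebra_iff_algebraMap_quotient_surjective (K : Type u) (Z : Type v) [Field K]
    [CommRing Z] [Algebra K Z] :
    IsSplitAlgebra K Z ↔
      ∀ p : Ideal Z, p.IsMaximal → Function.Surjective (algebraMap K (Z ⧸ p)) := by
  constructor
  · intro hsplit p hp x
    obtain ⟨z, rfl⟩ := Ideal.Quotient.mk_surjective x
    obtain ⟨k, hk⟩ := hsplit (Z ⧸ p) (isSimpleModule_iff_isCoatom.2 hp.out)
      (LinearMap.lsmul Z (Z ⧸ p) z)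
    exact ⟨k, by simpa [Algebra.smul_def] using (hk 1).symm⟩
  · intro hsurj S _ _ hS f
    obtain ⟨p, hp, ⟨e⟩⟩ := isSimpleModule_iff_quot_maximal.1 hS
    obtain ⟨k, hk⟩ := hsurj p hp (e (f (e.symm 1)))
    have f_generator : f (e.symm 1) = algebraMap K Z k • e.symm 1 := by
      apply e.injective
      rw [← hk, map_smul, e.apply_symm_apply, Algebra.smul_def, mul_one]
      rfl
    refine ⟨k, fun s ↦ ?_⟩
    obtain ⟨z, hz⟩ := Ideal.Quotient.mk_surjective (e s)
    have hs : s = z • e.symm 1 := by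
      rw [← map_smul, Algebra.smul_def, mul_one, Ideal.Quotient.algebraMap_eq, hz,
        e.symm_apply_apply]
    rw [hs, map_smul, f_generator, smul_comm]

end Split

section SpecBaseChange

section

variable (R S Z : Type*) [CommRing R] [CommRing S] [Algebra R S] [CommRing Z] [Algebra R Z]

/-- The projection `Spec (S ⊗ Z) → Spec Z` from the base change of `Spec Z` along `R → S`, which
compares the blocks of an algebra with center `Z` before and after extension of scalars. -/
abbrev specBaseChangeProj : PrimeSpectrum (S ⊗[R] Z) → PrimeSpectrum Z :=
  PrimeSpectrum.comap (Algebra.TensorProduct.includeRight : Z →ₐ[R] S ⊗[R] Z).toRingHom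

theorem specBaseChangeProj_surjective [Module.FaithfullyFlat R S] :
    Function.Surjective (specBaseChangeProj R S Z) := by
  let := Algebra.TensorProduct.rightAlgebra (R := R) (A := S) (B := Z)
  have : Module.FaithfullyFlat Z (S ⊗[R] Z) :=
    .of_linearEquiv _ _ (Algebra.TensorProduct.commRight R Z S).symm.toLinearEquiv
  exact PrimeSpectrum.comap_surjective_of_faithfullyFlat (A := Z) (B := S ⊗[R] Z)

variable {R Z}

theorem algebraMap_quotient_map_includeRight_surjective {p : Ideal Z}
    (hp : Function.Surjective (algebraMap R (Z ⧸ p))) :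
    Function.Surjective (algebraMap S
      ((S ⊗[R] Z) ⧸ p.map (Algebra.TensorProduct.includeRight : Z →ₐ[R] S ⊗[R] Z))) := by
  let e := Algebra.TensorProduct.tensorQuotientEquiv (R := R) S Z S p
  have hleft : Function.Surjective (algebraMap S (S ⊗[R] (Z ⧸ p))) :=
    Algebra.TensorProduct.includeLeft_surjective S S hp
  intro x
  obtain ⟨s, hs⟩ := hleft (e.symm x)
  exact ⟨s, by rw [← e.commutes, hs, e.apply_symm_apply]⟩

end

theorem isMaximal_of_algebraMap_quotient_surjective {L T : Type*} [Field L] [CommRing T]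
    [Algebra L T] {I : Ideal T} (hI : I ≠ ⊤) (hsurj : Function.Surjective (algebraMap L (T ⧸ I))) :
    I.IsMaximal := by
  have : Nontrivial (T ⧸ I) := Ideal.Quotient.nontrivial_iff.2 hI
  let e : L ≃+* T ⧸ I :=
    RingEquiv.ofBijective (algebraMap L (T ⧸ I)) ⟨(algebraMap L (T ⧸ I)).injective, hsurj⟩
  exact Ideal.Quotient.maximal_of_isField I (e.symm.toMulEquiv.isField (Field.toIsField L))

theorem specBaseChangeProj_injective {R Z : Type*} (L : Type*) [CommRing R] [CommRing Z]
    [Algebra R Z] [Field L] [Algebra R L]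
    (hsurj : ∀ p : Ideal Z, p.IsPrime → Function.Surjective (algebraMap R (Z ⧸ p))) :
    Function.Injective (specBaseChangeProj R L Z) := by
  intro P Q hPQ
  let p := (specBaseChangeProj R L Z P).asIdeal
  let I := p.map (Algebra.TensorProduct.includeRight : Z →ₐ[R] L ⊗[R] Z)
  have hIP : I ≤ P.asIdeal := Ideal.map_comap_le
  have hIQ : I ≤ Q.asIdeal := Ideal.map_le_iff_le_comap.2 (congrArg PrimeSpectrum.asIdeal hPQ).le
  have hI : I.IsMaximal := isMaximal_of_algebraMap_quotient_surjective
    (ne_top_of_le_ne_top P.isPrime.ne_top hIP)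
    (algebraMap_quotient_map_includeRight_surjective L
      (hsurj p (specBaseChangeProj R L Z P).isPrime))
  exact PrimeSpectrum.ext ((hI.eq_of_le P.isPrime.ne_top hIP).symm.trans
    (hI.eq_of_le Q.isPrime.ne_top hIQ))

theorem algHom_ker_injective (R T : Type*) [CommRing R] [Ring T] [Algebra R T] :
    Function.Injective (fun f : T →ₐ[R] R ↦ RingHom.ker f) := by
  intro f g hker
  ext x
  have hf : x - algebraMap R T (f x) ∈ RingHom.ker f := by simp
  have hg : x - algebraMap R T (f x) ∈ RingHom.ker g := (SetLike.ext_iff.1 hker _).1 hf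
  have hgf : g x - f x = 0 := by simpa using hg
  exact (sub_eq_zero.1 hgf).symm

theorem algHom_ker_injective_of_specBaseChangeProj_injective {R S Z : Type*} [CommRing R]
    [CommRing S] [IsDomain S] [Algebra R S] [CommRing Z] [Algebra R Z]
    (hinj : Function.Injective (specBaseChangeProj R S Z)) :
    Function.Injective (fun σ : Z →ₐ[R] S ↦ RingHom.ker σ) := by
  let point (σ : Z →ₐ[R] S) : PrimeSpectrum (S ⊗[R] Z) :=
    ⟨RingHom.ker (AlgHom.liftEquiv R S Z S σ), RingHom.ker_isPrime _⟩
  have proj_point (σ : Z →ₐ[R] S) :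
      (specBaseChangeProj R S Z (point σ)).asIdeal = RingHom.ker σ := by
    ext z
    change AlgHom.liftEquiv R S Z S σ (1 ⊗ₜ z) = 0 ↔ σ z = 0
    rw [AlgHom.liftEquiv_tmul, one_smul]
  intro σ τ hker
  have hpoint : point σ = point τ :=
    hinj (PrimeSpectrum.ext ((proj_point σ).trans (hker.trans (proj_point τ).symm)))
  exact (AlgHom.liftEquiv R S Z S).injective
    (algHom_ker_injective S _ (congrArg PrimeSpectrum.asIdeal hpoint))

theorem isPurelyInseparable_of_subsingleton_algHom (K F L : Type*) [Field K] [Field F]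
    [Algebra K F] [Algebra.IsAlgebraic K F] [Field L] [Algebra K L] [IsAlgClosed L]
    [Subsingleton (F →ₐ[K] L)] : IsPurelyInseparable K F := by
  apply isPurelyInseparable_of_finSepDegree_eq_one
  rw [Field.finSepDegree_eq_of_isAlgClosed K F L, Nat.card_eq_one_iff_unique]
  exact ⟨inferInstance, ⟨IsAlgClosed.lift⟩⟩

theorem algebraMap_quotient_surjective_of_specBaseChangeProj_injective {K L Z : Type*} [Field K]
    [PerfectField K] [Field L] [Algebra K L] [IsAlgClosed L] [CommRing Z] [Algebra K Z]
    [Algebra.IsIntegral K Z] (hinj : Function.Injective (specBaseChangeProj K L Z))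
    (p : Ideal Z) [p.IsMaximal] : Function.Surjective (algebraMap K (Z ⧸ p)) := by
  let := Ideal.Quotient.field p
  have ker_comp_mk (σ : (Z ⧸ p) →ₐ[K] L) :
      RingHom.ker (σ.comp (Ideal.Quotient.mkₐ K p)) = p := by
    ext z
    change σ (Ideal.Quotient.mk p z) = 0 ↔ z ∈ p
    rw [map_eq_zero_iff σ σ.injective, Ideal.Quotient.eq_zero_iff_mem]
  have : Subsingleton ((Z ⧸ p) →ₐ[K] L) :=
    ⟨fun σ τ ↦ Ideal.Quotient.algHom_ext K <|
      algHom_ker_injective_of_specBaseChangeProj_injective hinj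
        ((ker_comp_mk σ).trans (ker_comp_mk τ).symm)⟩
  have := isPurelyInseparable_of_subsingleton_algHom K (Z ⧸ p) L
  exact IsPurelyInseparable.surjective_algebraMap_of_isSeparable K (Z ⧸ p)

theorem numBlocks_eq_numBlocks_tensorProduct_iff (K L A : Type*) [Field K] [Field L] [Algebra K L]
    [Ring A] [Algebra K A] [FiniteDimensional K (Subalgebra.center K A)] :
    numBlocks A = numBlocks (L ⊗[K] A) ↔
      Function.Injective (specBaseChangeProj K L (Subalgebra.center K A)) := by
  have : IsArtinianRing (Subalgebra.center K A) := .of_finite K _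
  have : IsArtinianRing (L ⊗[K] Subalgebra.center K A) := .of_finite L _
  have numBlocks_A : numBlocks A = Nat.card (PrimeSpectrum (Subalgebra.center K A)) :=
    (numBlocks_center K A).symm.trans (numBlocks_eq_natCard_primeSpectrum _)
  rw [numBlocks_A, ← numBlocks_tensorProduct_center K L A, numBlocks_eq_natCard_primeSpectrum]
  have hsurj := specBaseChangeProj_surjective K L (Subalgebra.center K A)
  exact ⟨fun hcard ↦ ((Nat.bijective_iff_surjective_and_card _).2 ⟨hsurj, hcard.symm⟩).1,
    fun hinj ↦ (Nat.card_congr (Equiv.ofBijective _ ⟨hinj, hsurj⟩)).symm⟩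

end SpecBaseChange

theorem stmt16_general (K : Type u) [Field K] (A : Type v) [Ring A] [Algebra K A]
    [FiniteDimensional K (Subalgebra.center K A)] :
    (IsSplitAlgebra K (Subalgebra.center K A) → IsBlockSplit K A) ∧
    (PerfectField K → IsBlockSplit K A → IsSplitAlgebra K (Subalgebra.center K A)) := by
  have : IsArtinianRing (Subalgebra.center K A) := .of_finite K _
  have split_iff :=
    isSplitAlgebra_iff_algebraMap_quotient_surjective K (Subalgebra.center K A)
  constructor
  · intro hsplit L _ _
    exact (numBlocks_eq_numBlocks_tensorProduct_iff K L A).2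
      (specBaseChangeProj_injective L fun p hp ↦ split_iff.1 hsplit p (Ideal.IsPrime.isMaximal' hp))
  · intro _ hblock
    exact split_iff.2 fun p _ ↦ algebraMap_quotient_surjective_of_specBaseChangeProj_injective
      ((numBlocks_eq_numBlocks_tensorProduct_iff K (AlgebraicClosure K) A).1 (hblock _)) p

/-- **Lemma `split_center_lemma`.** If the center of a finite-dimensional `K`-algebra `A` is a
split `K`-algebra then `A` is block-split; conversely, if `K` is perfect and `A` is block-split
then its center is split. -/
theorem stmt16 (K : Type u) [Field K] (A : Type u) [Ring A] [Algebra K A]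
    [FiniteDimensional K A] :
    (IsSplitAlgebra K (Subalgebra.center K A) → IsBlockSplit K A) ∧
    (PerfectField K → IsBlockSplit K A → IsSplitAlgebra K (Subalgebra.center K A)) :=
  stmt16_general K A
end
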